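/- (Theorem 2.2, Euler case.) Let n ≥ 1 and 1 < γ ≤ 1 + 2/n. Suppose M(0) ∈ (0,∞), ℙ(0) ≠ 0, F(0), G(0) are finite, IE(0) ∈ (0,∞), and the initial data satisfy IE(0)^{n(γ−1)/2} · IJ(0) / M(0)^{((n+2)γ−n)/2} < (Γ(n/2+1)/π^{n/2})^{γ−1} / (2^{((n+2)γ−n)/2}(γ−1)), where IJ(0) = G(0) − F(0) + IE(0). Then there exists a finite time T₂* > 0, determined by M(0), F(0), G(0), IE(0), γ and n, such that no classical solution of the isentropic compressible Euler equations with these initial physical quantities, satisfying the decay and integrability conditions, can exist on ℝⁿ × [0, T₂*]; in particular there is no such global-in-time solution. -/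

import Mathlib

open MeasureTheory Filter
open scoped InnerProductSpace

noncomputable section

/-- A classical solution of the isentropic compressible Euler equations
`∂ₜρ + div(ρu) = 0`, `∂ₜ(ρuᵢ) + div(ρuᵢu) + ∂ᵢ(ρ^γ) = 0` on `ℝⁿ × [0,T]`,
together with the decay conditions (9-25), the integrability conditions on the
physical quantities, and differentiability of these quantities with derivatives
computed by differentiating under the integral sign. -/
structure IsentropicEulerSolution (n : ℕ) (γ T : ℝ) where
  ρ : ℝ → EuclideanSpace ℝ (Fin n) → ℝ
  u : ℝ → EuclideanSpace ℝ (Fin n) → EuclideanSpace ℝ (Fin n)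
  ρ_nonneg : ∀ t ∈ Set.Icc 0 T, ∀ x, 0 ≤ ρ t x
  /-- `ρ` is `C¹` on `[0,T] × ℝⁿ`. -/
  smooth_ρ : ContDiffOn ℝ 1 (fun p : ℝ × EuclideanSpace ℝ (Fin n) => ρ p.1 p.2)
    (Set.Icc 0 T ×ˢ Set.univ)
  /-- `u` is `C¹` on `[0,T] × ℝⁿ`. -/
  smooth_u : ContDiffOn ℝ 1 (fun p : ℝ × EuclideanSpace ℝ (Fin n) => u p.1 p.2)
    (Set.Icc 0 T ×ˢ Set.univ)
  /-- Conservation of mass: `∂ₜρ + div(ρu) = 0`. -/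
  mass_eq : ∀ t ∈ Set.Icc 0 T, ∀ x,
    deriv (fun τ => ρ τ x) t
      + ∑ i : Fin n, fderiv ℝ (fun y => ρ t y * u t y i) x (EuclideanSpace.single i 1) = 0
  /-- Conservation of momentum: `∂ₜ(ρuᵢ) + div(ρuᵢu) + ∂ᵢ(ρ^γ) = 0`. -/
  momentum_eq : ∀ t ∈ Set.Icc 0 T, ∀ x, ∀ i : Fin n,
    deriv (fun τ => ρ τ x * u τ x i) t
      + ∑ j : Fin n, fderiv ℝ (fun y => ρ t y * u t y i * u t y j) x (EuclideanSpace.single j 1)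
      + fderiv ℝ (fun y => ρ t y ^ γ) x (EuclideanSpace.single i 1) = 0
  /-- decay: `|u| → 0` as `|x| → ∞`. -/
  decay_u : ∀ t ∈ Set.Icc 0 T,
    Tendsto (fun x => ‖u t x‖) (Bornology.cobounded _) (nhds 0)
  /-- decay: `ρ|u| = o(|x|^{-(n+1)})`. -/
  decay_ρu : ∀ t ∈ Set.Icc 0 T,
    Tendsto (fun x => ‖x‖ ^ (n + 1) * (ρ t x * ‖u t x‖)) (Bornology.cobounded _) (nhds 0)
  /-- decay: `|∇ₓu| = o(|x|^{-n})`. -/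
  decay_gradu : ∀ t ∈ Set.Icc 0 T,
    Tendsto (fun x => ‖x‖ ^ n * ‖fderiv ℝ (u t) x‖) (Bornology.cobounded _) (nhds 0)
  /-- decay: the pressure `ρ^γ = o(|x|^{-n})`. -/
  decay_p : ∀ t ∈ Set.Icc 0 T,
    Tendsto (fun x => ‖x‖ ^ n * ρ t x ^ γ) (Bornology.cobounded _) (nhds 0)
  int_ρ : ∀ t ∈ Set.Icc 0 T, Integrable (ρ t)
  int_ρu : ∀ t ∈ Set.Icc 0 T, Integrable (fun x => ρ t x * ‖u t x‖)
  int_ρu2 : ∀ t ∈ Set.Icc 0 T, Integrable (fun x => ρ t x * ‖u t x‖ ^ 2)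
  int_ρx2 : ∀ t ∈ Set.Icc 0 T, Integrable (fun x => ρ t x * ‖x‖ ^ 2)
  int_ρux : ∀ t ∈ Set.Icc 0 T, Integrable (fun x => ρ t x * ‖u t x‖ * ‖x‖)
  int_ργ : ∀ t ∈ Set.Icc 0 T, Integrable (fun x => ρ t x ^ γ)
  /-- `M(t) = ∫ρ` is differentiable, by differentiation under the integral sign. -/
  hM : ∀ t ∈ Set.Icc 0 T,
    HasDerivAt (fun τ => ∫ x, ρ τ x) (∫ x, deriv (fun τ => ρ τ x) t) t
  /-- `ℙ(t) = ∫ρu` is differentiable, by differentiation under the integral sign. -/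
  hP : ∀ t ∈ Set.Icc 0 T,
    HasDerivAt (fun τ => ∫ x, ρ τ x • u τ x) (∫ x, deriv (fun τ => ρ τ x • u τ x) t) t
  /-- `F(t) = ∫ρ u·x` is differentiable, by differentiation under the integral sign. -/
  hF : ∀ t ∈ Set.Icc 0 T,
    HasDerivAt (fun τ => ∫ x, ρ τ x * ⟪u τ x, x⟫_ℝ)
      (∫ x, deriv (fun τ => ρ τ x * ⟪u τ x, x⟫_ℝ) t) t
  /-- `G(t) = (1/2)∫ρ|x|²` is differentiable, by differentiation under the integral sign. -/
  hG : ∀ t ∈ Set.Icc 0 T,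
    HasDerivAt (fun τ => (1 / 2 : ℝ) * ∫ x, ρ τ x * ‖x‖ ^ 2)
      ((1 / 2 : ℝ) * ∫ x, deriv (fun τ => ρ τ x * ‖x‖ ^ 2) t) t
  /-- `IE(t) = E_k(t) + I(t)` is differentiable, by differentiation under the integral
  sign. -/
  hIE : ∀ t ∈ Set.Icc 0 T,
    HasDerivAt (fun τ => ∫ x, ((1 / 2 : ℝ) * ρ τ x * ‖u τ x‖ ^ 2 + ρ τ x ^ γ / (γ - 1)))
      (∫ x, deriv (fun τ => (1 / 2 : ℝ) * ρ τ x * ‖u τ x‖ ^ 2 + ρ τ x ^ γ / (γ - 1)) t) t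

namespace IsentropicEulerSolution

variable {n : ℕ} {γ T : ℝ}

/-- The mass `M(t) = ∫ ρ dx`. -/
def M (S : IsentropicEulerSolution n γ T) (t : ℝ) : ℝ := ∫ x, S.ρ t x

/-- The momentum `ℙ(t) = ∫ ρ u dx`. -/
def P (S : IsentropicEulerSolution n γ T) (t : ℝ) : EuclideanSpace ℝ (Fin n) :=
  ∫ x, S.ρ t x • S.u t x

/-- The momentum weight `F(t) = ∫ ρ u·x dx`. -/
def F (S : IsentropicEulerSolution n γ T) (t : ℝ) : ℝ := ∫ x, S.ρ t x * ⟪S.u t x, x⟫_ℝ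

/-- The momentum of inertia `G(t) = (1/2) ∫ ρ |x|² dx`. -/
def G (S : IsentropicEulerSolution n γ T) (t : ℝ) : ℝ := (1 / 2 : ℝ) * ∫ x, S.ρ t x * ‖x‖ ^ 2

/-- The kinetic energy `E_k(t) = (1/2) ∫ ρ |u|² dx`. -/
def Ek (S : IsentropicEulerSolution n γ T) (t : ℝ) : ℝ :=
  (1 / 2 : ℝ) * ∫ x, S.ρ t x * ‖S.u t x‖ ^ 2

/-- The potential energy `I(t) = (1/(γ−1)) ∫ ρ^γ dx`. -/
def I (S : IsentropicEulerSolution n γ T) (t : ℝ) : ℝ := (1 / (γ - 1)) * ∫ x, S.ρ t x ^ γ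

/-- The energy `IE(t) = E_k(t) + I(t)`. -/
def IE (S : IsentropicEulerSolution n γ T) (t : ℝ) : ℝ := S.Ek t + S.I t

/-- The functional `IJ(t) = G(t) − (t+1)F(t) + (t+1)² IE(t)`. -/
def IJ (S : IsentropicEulerSolution n γ T) (t : ℝ) : ℝ :=
  S.G t - (t + 1) * S.F t + (t + 1) ^ 2 * S.IE t

end IsentropicEulerSolution

/-!
Along a solution `M` and `IE` are constant, `G' = F` and `F' = 2 E_k + n (γ - 1) I ≤ 2 IE`, so `G`
grows at most like `IE(0) t²`. These identities also give
`IJ' = (2 - n (γ - 1)) (t + 1) I`, while expanding `∫ ρ |x - (t + 1) u|² / 2 ≥ 0` gives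
`(t + 1)² I ≤ IJ`; hence `(t + 1)^(n (γ - 1) - 2) IJ` is nonincreasing and
`(t + 1)^(n (γ - 1)) I ≤ IJ(0)`. On the other hand mass that stays within inertia `G` cannot have
small `∫ ρ^γ`: Hölder's inequality against a Gaussian of width tuned to `G / M` bounds
`G^(n (γ - 1) / 2) ∫ ρ^γ` from below by a power of `M`, and an elementary estimate of `Γ(n/2 + 1)`
brings in the stated constant. Letting `t → ∞`, the two bounds contradict the smallness condition.

Nothing makes `∂ₜρ |x|²` or `∂ₜ(ρu) · x` integrable in space, so `G'` and `F'` are computed for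
weights cut off at radius `N`: since the fluxes against these weights are bounded uniformly in `N`
and in time, the integrated identities survive the limit `N → ∞`.
-/

lemma add_one_mul_rpow_le_rpow_add_one {m : ℝ} (hm : 1 ≤ m) :
    (m + 1) * ((2 * m + 1) / 4) ^ m ≤ ((2 * m + 3) / 4) ^ (m + 1) := by
  have bernoulli : (4 * m + 4) / (2 * m + 3) ≤ (1 + 2 / (2 * m + 1)) ^ m := calc
    (4 * m + 4) / (2 * m + 3) ≤ 1 + m * (2 / (2 * m + 1)) := by
      rw [← sub_nonneg]
      have : 1 + m * (2 / (2 * m + 1)) - (4 * m + 4) / (2 * m + 3)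
          = (2 * m - 1) / ((2 * m + 1) * (2 * m + 3)) := by
        field_simp
        ring
      rw [this]
      exact div_nonneg (by linarith) (by positivity)
    _ ≤ (1 + 2 / (2 * m + 1)) ^ m :=
      one_add_mul_self_le_rpow_one_add
        (by linarith [show 0 ≤ 2 / (2 * m + 1) by positivity]) hm
  calc (m + 1) * ((2 * m + 1) / 4) ^ m
      = (4 * m + 4) / (2 * m + 3) * ((2 * m + 1) / 4) ^ m * ((2 * m + 3) / 4) := by
        field_simp
    _ ≤ (1 + 2 / (2 * m + 1)) ^ m * ((2 * m + 1) / 4) ^ m * ((2 * m + 3) / 4) := by gcongr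
    _ = ((2 * m + 3) / 4) ^ (m + 1) := by
        rw [← Real.mul_rpow (by positivity) (by positivity), Real.rpow_add_one (by positivity)]
        congr 2
        field_simp
        ring

lemma Gamma_half_add_one_le (n : ℕ) :
    Real.Gamma ((n : ℝ) / 2 + 1) ≤ 3 / 2 * (((n : ℝ) + 1) / 4) ^ ((n : ℝ) / 2) := by
  have sqrt_pi : √Real.pi ≤ 2 := Real.sqrt_le_iff.2 ⟨by norm_num, by linarith [Real.pi_le_four]⟩
  induction n using Nat.strong_induction_on with
  | _ n ih =>
  match n with
  | 0 => norm_num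
  | 1 =>
    have : 2 / 3 ≤ √(1 / 2 : ℝ) := Real.le_sqrt_of_sq_le (by norm_num)
    rw [Nat.cast_one, Real.Gamma_add_one (by norm_num), Real.Gamma_one_half_eq,
      ← Real.sqrt_eq_rpow, show (1 + 1 : ℝ) / 4 = 1 / 2 by norm_num]
    linarith
  | 2 => norm_num
  | 3 =>
    rw [show ((3 : ℕ) : ℝ) / 2 = 1 / 2 + 1 by norm_num, Real.Gamma_add_one (by norm_num),
      Real.Gamma_add_one (by norm_num), Real.Gamma_one_half_eq,
      show (((3 : ℕ) : ℝ) + 1) / 4 = 1 by norm_num, Real.one_rpow]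
    linarith
  | k + 4 =>
    have step := add_one_mul_rpow_le_rpow_add_one (m := ((k : ℝ) + 2) / 2)
      (by linarith [k.cast_nonneg (α := ℝ)])
    have ih := ih (k + 2) (by omega)
    push_cast at ih ⊢
    rw [show ((k : ℝ) + 4) / 2 = ((k : ℝ) + 2) / 2 + 1 by ring,
      Real.Gamma_add_one (by positivity)]
    calc (((k : ℝ) + 2) / 2 + 1) * Real.Gamma (((k : ℝ) + 2) / 2 + 1)
        ≤ (((k : ℝ) + 2) / 2 + 1) *
            (3 / 2 * (((k : ℝ) + 2 + 1) / 4) ^ (((k : ℝ) + 2) / 2)) := by gcongr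
      _ = 3 / 2 * ((((k : ℝ) + 2) / 2 + 1) *
            ((2 * (((k : ℝ) + 2) / 2) + 1) / 4) ^ (((k : ℝ) + 2) / 2)) := by ring_nf
      _ ≤ 3 / 2 * ((2 * (((k : ℝ) + 2) / 2) + 3) / 4) ^ (((k : ℝ) + 2) / 2 + 1) := by gcongr
      _ = 3 / 2 * (((k : ℝ) + 4 + 1) / 4) ^ (((k : ℝ) + 2) / 2 + 1) := by ring_nf

lemma Gamma_half_add_one_le_rpow_mul_rpow (n : ℕ) {b : ℝ} (hb : (n : ℝ) / 2 + 1 ≤ b) :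
    Real.Gamma ((n : ℝ) / 2 + 1) ≤
      (2 * (1 - ((n : ℝ) + 1) / 4 / b)) ^ b * (((n : ℝ) + 1) / 4) ^ ((n : ℝ) / 2) := by
  have hn : (0 : ℝ) ≤ n := n.cast_nonneg
  have hb₀ : 0 < b := by linarith
  have hs : ((n : ℝ) + 1) / 2 / b ≤ 1 := (div_le_one hb₀).2 (by linarith)
  refine (Gamma_half_add_one_le n).trans ?_
  gcongr
  calc (3 / 2 : ℝ) ≤ 1 + b * (1 - ((n : ℝ) + 1) / 2 / b) := by
        rw [mul_sub, mul_div_cancel₀ _ hb₀.ne']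
        linarith
    _ ≤ (1 + (1 - ((n : ℝ) + 1) / 2 / b)) ^ b :=
        one_add_mul_self_le_rpow_one_add (by linarith) (by linarith)
    _ = (2 * (1 - ((n : ℝ) + 1) / 4 / b)) ^ b := by ring_nf

lemma Gamma_div_pi_rpow_mul_half_rpow_le {n : ℕ} {γ M : ℝ} (hγ : 1 < γ)
    (hγn : (n : ℝ) * (γ - 1) ≤ 2) (hM : 0 < M) :
    (Real.Gamma ((n : ℝ) / 2 + 1) / Real.pi ^ ((n : ℝ) / 2)) ^ (γ - 1) *
        (M / 2) ^ ((((n : ℝ) + 2) * γ - n) / 2)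
      ≤ ((1 - ((n : ℝ) + 1) / 4 / (γ / (γ - 1))) * M) ^ γ *
          (((n : ℝ) + 1) / 4 * M / (2 * Real.pi)) ^ ((n : ℝ) * (γ - 1) / 2) := by
  have hγ₁ : 0 < γ - 1 := by linarith
  have hpi := Real.pi_pos
  have hΓ := Gamma_half_add_one_le_rpow_mul_rpow n (b := γ / (γ - 1))
    (by rw [le_div_iff₀ hγ₁]; linarith)
  set c : ℝ := ((n : ℝ) + 1) / 4 with hc
  set b : ℝ := γ / (γ - 1) with hb
  have hb₀ : 0 < b := by positivity
  have hθ : 0 < 1 - c / b := by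
    rw [sub_pos, div_lt_one hb₀, hb, lt_div_iff₀ hγ₁, hc]
    linarith
  have hbγ : b * (γ - 1) = γ := by rw [hb]; field_simp
  calc (Real.Gamma ((n : ℝ) / 2 + 1) / Real.pi ^ ((n : ℝ) / 2)) ^ (γ - 1) *
        (M / 2) ^ ((((n : ℝ) + 2) * γ - n) / 2)
      ≤ ((2 * (1 - c / b)) ^ b * c ^ ((n : ℝ) / 2) / Real.pi ^ ((n : ℝ) / 2)) ^ (γ - 1) *
          (M / 2) ^ ((((n : ℝ) + 2) * γ - n) / 2) := by gcongr
    _ = (2 * (1 - c / b)) ^ γ * (c / Real.pi) ^ ((n : ℝ) * (γ - 1) / 2) *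
          ((M / 2) ^ γ * (M / 2) ^ ((n : ℝ) * (γ - 1) / 2)) := by
        rw [mul_div_assoc, ← Real.div_rpow (by positivity) hpi.le,
          Real.mul_rpow (by positivity) (by positivity), ← Real.rpow_mul (by positivity),
          ← Real.rpow_mul (by positivity), ← Real.rpow_add (by positivity), hbγ]
        ring_nf
    _ = ((1 - c / b) * M) ^ γ * (c * M / (2 * Real.pi)) ^ ((n : ℝ) * (γ - 1) / 2) := by
        rw [mul_mul_mul_comm, ← Real.mul_rpow (by positivity) (by positivity),
          ← Real.mul_rpow (by positivity) (by positivity)]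
        ring_nf

section Interpolation

variable {V : Type*} [NormedAddCommGroup V] [InnerProductSpace ℝ V] [FiniteDimensional ℝ V]
  [MeasurableSpace V] [BorelSpace V] {ρ : V → ℝ} {γ : ℝ}

lemma integrable_exp_neg_mul_sq_norm {a : ℝ} (ha : 0 < a) :
    Integrable fun x : V => Real.exp (-a * ‖x‖ ^ 2) := by
  refine Integrable.of_integral_ne_zero ?_
  rw [GaussianFourier.integral_rexp_neg_mul_sq_norm ha]
  exact (Real.rpow_pos_of_pos (div_pos Real.pi_pos ha) _).ne'

lemma integral_sub_mul_integral_sq_norm_le (hρ : 0 ≤ ρ) (hρ_int : Integrable ρ)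
    (hρ_sq : Integrable fun x => ρ x * ‖x‖ ^ 2) {a : ℝ} (ha : 0 ≤ a) :
    (∫ x, ρ x) - a * ∫ x, ρ x * ‖x‖ ^ 2 ≤ ∫ x, ρ x * Real.exp (-a * ‖x‖ ^ 2) := by
  have hρ_exp : Integrable fun x => ρ x * Real.exp (-a * ‖x‖ ^ 2) := by
    refine hρ_int.mul_bdd (c := 1) (by fun_prop) (ae_of_all _ fun x => ?_)
    rw [Real.norm_eq_abs, Real.abs_exp, Real.exp_le_one_iff]
    nlinarith [sq_nonneg ‖x‖]
  rw [← integral_const_mul, ← integral_sub hρ_int (hρ_sq.const_mul a)]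
  refine integral_mono (hρ_int.sub (hρ_sq.const_mul a)) hρ_exp fun x => ?_
  calc ρ x - a * (ρ x * ‖x‖ ^ 2) = ρ x * (-a * ‖x‖ ^ 2 + 1) := by ring
    _ ≤ ρ x * Real.exp (-a * ‖x‖ ^ 2) := by
      gcongr
      exacts [hρ x, Real.add_one_le_exp _]

lemma integral_mul_exp_rpow_le (hγ : 1 < γ) (hρ : 0 ≤ ρ) (hρ_meas : AEStronglyMeasurable ρ)
    (hρ_pow : Integrable fun x => ρ x ^ γ) {a : ℝ} (ha : 0 < a) :
    (∫ x, ρ x * Real.exp (-a * ‖x‖ ^ 2)) ^ γ ≤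
      (∫ x, ρ x ^ γ) *
        (Real.pi / (γ / (γ - 1) * a)) ^ ((Module.finrank ℝ V : ℝ) * (γ - 1) / 2) := by
  set q : ℝ := γ / (γ - 1)
  have hγq : γ.HolderConjugate q := Real.HolderConjugate.conjExponent hγ
  have hγ₀ : 0 < γ := hγq.pos
  have hq₀ : 0 < q := hγq.symm.pos
  have exp_rpow (x : V) : Real.exp (-a * ‖x‖ ^ 2) ^ q = Real.exp (-(q * a) * ‖x‖ ^ 2) := by
    rw [← Real.exp_mul]
    ring_nf
  have memLp_ρ : MemLp ρ (ENNReal.ofReal γ) := by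
    rw [← integrable_norm_rpow_iff hρ_meas (by simpa using hγ₀) (by simp),
      ENNReal.toReal_ofReal hγ₀.le]
    simpa [abs_of_nonneg (hρ _)] using hρ_pow
  have memLp_exp : MemLp (fun x : V => Real.exp (-a * ‖x‖ ^ 2)) (ENNReal.ofReal q) := by
    rw [← integrable_norm_rpow_iff (by fun_prop) (by simpa using hq₀) (by simp),
      ENNReal.toReal_ofReal hq₀.le]
    simpa only [Real.norm_eq_abs, Real.abs_exp, exp_rpow] using
      integrable_exp_neg_mul_sq_norm (by positivity : 0 < q * a)
  have holder := integral_mul_le_Lp_mul_Lq_of_nonneg hγq (ae_of_all _ hρ)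
    (ae_of_all _ fun x => (Real.exp_pos _).le) memLp_ρ memLp_exp
  simp_rw [exp_rpow] at holder
  rw [GaussianFourier.integral_rexp_neg_mul_sq_norm (by positivity)] at holder
  have hJ : 0 ≤ ∫ x, ρ x ^ γ := integral_nonneg fun x => Real.rpow_nonneg (hρ x) _
  calc (∫ x, ρ x * Real.exp (-a * ‖x‖ ^ 2)) ^ γ
      ≤ ((∫ x, ρ x ^ γ) ^ (1 / γ) *
          ((Real.pi / (q * a)) ^ ((Module.finrank ℝ V : ℝ) / 2)) ^ (1 / q)) ^ γ := by
        gcongr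
        exact integral_nonneg fun x => mul_nonneg (hρ x) (Real.exp_pos _).le
    _ = _ := by
        rw [Real.mul_rpow (by positivity) (by positivity), ← Real.rpow_mul hJ,
          ← Real.rpow_mul (by positivity), ← Real.rpow_mul (by positivity),
          one_div_mul_cancel hγ₀.ne', Real.rpow_one]
        congr 2
        simp only [q]
        field_simp

lemma one_sub_mul_integral_rpow_le (hγ : 1 < γ) (hρ : 0 ≤ ρ) (hρ_int : Integrable ρ)
    (hρ_sq : Integrable fun x => ρ x * ‖x‖ ^ 2) (hρ_pow : Integrable fun x => ρ x ^ γ)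
    (hM : 0 < ∫ x, ρ x) {Q : ℝ} (hQ : 0 < Q) (hρQ : (1 / 2 : ℝ) * ∫ x, ρ x * ‖x‖ ^ 2 ≤ Q)
    {θ : ℝ} (hθ : 0 < θ) (hθ₁ : θ ≤ 1) :
    ((1 - θ) * ∫ x, ρ x) ^ γ ≤ (∫ x, ρ x ^ γ) *
      (2 * Real.pi * Q / (γ / (γ - 1) * θ * ∫ x, ρ x)) ^
        ((Module.finrank ℝ V : ℝ) * (γ - 1) / 2) := by
  set M : ℝ := ∫ x, ρ x
  set a : ℝ := θ * M / (2 * Q) with ha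
  have ha₀ : 0 < a := by positivity
  have mass_loss : a * ∫ x, ρ x * ‖x‖ ^ 2 ≤ θ * M := calc
    a * ∫ x, ρ x * ‖x‖ ^ 2 ≤ a * (2 * Q) := by gcongr; linarith
    _ = θ * M := by rw [ha]; field_simp
  calc ((1 - θ) * M) ^ γ ≤ (∫ x, ρ x * Real.exp (-a * ‖x‖ ^ 2)) ^ γ := by
        refine Real.rpow_le_rpow (mul_nonneg (by linarith) hM.le) ?_ (by linarith)
        linarith [integral_sub_mul_integral_sq_norm_le hρ hρ_int hρ_sq ha₀.le]
    _ ≤ (∫ x, ρ x ^ γ) *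
          (Real.pi / (γ / (γ - 1) * a)) ^ ((Module.finrank ℝ V : ℝ) * (γ - 1) / 2) :=
        integral_mul_exp_rpow_le hγ hρ hρ_int.1 hρ_pow ha₀
    _ = _ := by
        congr 2
        rw [ha]
        field_simp

lemma Gamma_div_pi_rpow_mul_half_integral_rpow_le (hγ : 1 < γ)
    (hγd : (Module.finrank ℝ V : ℝ) * (γ - 1) ≤ 2) (hρ : 0 ≤ ρ) (hρ_int : Integrable ρ)
    (hρ_sq : Integrable fun x => ρ x * ‖x‖ ^ 2) (hρ_pow : Integrable fun x => ρ x ^ γ)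
    (hM : 0 < ∫ x, ρ x) {Q : ℝ} (hQ : 0 < Q) (hρQ : (1 / 2 : ℝ) * ∫ x, ρ x * ‖x‖ ^ 2 ≤ Q) :
    (Real.Gamma ((Module.finrank ℝ V : ℝ) / 2 + 1) /
          Real.pi ^ ((Module.finrank ℝ V : ℝ) / 2)) ^ (γ - 1) *
        ((∫ x, ρ x) / 2) ^ ((((Module.finrank ℝ V : ℝ) + 2) * γ - Module.finrank ℝ V) / 2)
      ≤ (∫ x, ρ x ^ γ) * Q ^ ((Module.finrank ℝ V : ℝ) * (γ - 1) / 2) := by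
  have hγ₁ : 0 < γ - 1 := by linarith
  have scalar := Gamma_div_pi_rpow_mul_half_rpow_le hγ hγd hM
  have holder {θ : ℝ} := one_sub_mul_integral_rpow_le (θ := θ) hγ hρ hρ_int hρ_sq hρ_pow hM hQ hρQ
  set d : ℝ := (Module.finrank ℝ V : ℝ)
  set c : ℝ := (d + 1) / 4 with hc
  set b : ℝ := γ / (γ - 1) with hb
  set M : ℝ := ∫ x, ρ x
  have hc₀ : 0 < c := by positivity
  have hb₀ : 0 < b := by positivity
  have hcb : c / b ≤ 1 := by
    rw [div_le_one hb₀, hb, le_div_iff₀ hγ₁, hc]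
    linarith
  refine scalar.trans ?_
  calc ((1 - c / b) * M) ^ γ * (c * M / (2 * Real.pi)) ^ (d * (γ - 1) / 2)
      ≤ (∫ x, ρ x ^ γ) * (2 * Real.pi * Q / (b * (c / b) * M)) ^ (d * (γ - 1) / 2) *
          (c * M / (2 * Real.pi)) ^ (d * (γ - 1) / 2) := by
        gcongr
        exact holder (by positivity) hcb
    _ = (∫ x, ρ x ^ γ) * Q ^ (d * (γ - 1) / 2) := by
        rw [mul_assoc, ← Real.mul_rpow (by positivity) (by positivity)]
        congr 2
        field_simp

end Interpolation

lemma hasDerivAt_of_tendsto_of_norm_le {F : Type*} [NormedAddCommGroup F] [NormedSpace ℝ F]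
    [CompleteSpace F] {a b C : ℝ} {f f' : ℕ → ℝ → F} {g h : ℝ → F}
    (hf : ∀ N, ∀ s ∈ Set.Ioo a b, HasDerivAt (f N) (f' N s) s)
    (hC : ∀ N, ∀ s ∈ Set.Ioo a b, ‖f' N s‖ ≤ C)
    (hg : ∀ s ∈ Set.Ioo a b, Tendsto (fun N => f N s) atTop (nhds (g s)))
    (hh : ∀ s ∈ Set.Ioo a b, Tendsto (fun N => f' N s) atTop (nhds (h s)))
    (hcont : ContinuousOn h (Set.Ioo a b)) {t : ℝ} (ht : t ∈ Set.Ioo a b) :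
    HasDerivAt g (h t) t := by
  have integral_eq (s : ℝ) (hs : s ∈ Set.Ioo a b) : g s = g t + ∫ r in t..s, h r := by
    have hsub : Set.uIcc t s ⊆ Set.Ioo a b := Set.ordConnected_Ioo.uIcc_subset ht hs
    have hsub' : Set.uIoc t s ⊆ Set.Ioo a b := Set.uIoc_subset_uIcc.trans hsub
    have meas (N : ℕ) : AEStronglyMeasurable (f' N) (volume.restrict (Set.uIoc t s)) :=
      (aestronglyMeasurable_deriv (f N) _).congr <|
        (ae_restrict_mem measurableSet_uIoc).mono fun r hr => (hf N r (hsub' hr)).deriv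
    have ftc (N : ℕ) : ∫ r in t..s, f' N r = f N s - f N t :=
      intervalIntegral.integral_eq_sub_of_hasDerivAt (fun r hr => hf N r (hsub hr)) <|
        (intervalIntegrable_const (c := C)).mono_fun (meas N) <|
          (ae_restrict_mem measurableSet_uIoc).mono fun r hr =>
            (hC N r (hsub' hr)).trans (Real.le_norm_self C)
    have lim : Tendsto (fun N => f N s - f N t) atTop (nhds (∫ r in t..s, h r)) := by
      simp_rw [← ftc]
      exact intervalIntegral.tendsto_integral_filter_of_dominated_convergence (fun _ => C)
        (Eventually.of_forall meas)
        (Eventually.of_forall fun N => ae_of_all _ fun r hr => hC N r (hsub' hr))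
        intervalIntegrable_const (ae_of_all _ fun r hr => hh r (hsub' hr))
    rw [← tendsto_nhds_unique ((hg s hs).sub (hg t ht)) lim, add_sub_cancel]
  have hnhds : Set.Ioo a b ∈ nhds t := isOpen_Ioo.mem_nhds ht
  have deriv_integral : HasDerivAt (fun s => ∫ r in t..s, h r) (h t) t :=
    intervalIntegral.integral_hasDerivAt_right IntervalIntegrable.refl
      (hcont.stronglyMeasurableAtFilter isOpen_Ioo t ht) (hcont.continuousAt hnhds)
  exact (deriv_integral.const_add (g t)).congr_of_eventuallyEq
    (eventually_of_mem hnhds integral_eq)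

section Pratt

variable {α ι : Type*} [MeasurableSpace α] {μ : Measure α} {l : Filter ι}
  [l.IsCountablyGenerated] {f : ι → α → ℝ} {f₀ : α → ℝ}

lemma tendsto_integral_min_of_nonneg (hf_meas : ∀ᶠ i in l, AEStronglyMeasurable (f i) μ)
    (hf : ∀ᶠ i in l, 0 ≤ᵐ[μ] f i) (hf₀_int : Integrable f₀ μ)
    (hf_lim : ∀ᵐ x ∂μ, Tendsto (f · x) l (nhds (f₀ x))) :
    Tendsto (fun i => ∫ x, min (f i x) (f₀ x) ∂μ) l (nhds (∫ x, f₀ x ∂μ)) := by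
  refine tendsto_integral_filter_of_dominated_convergence (fun x => |f₀ x|)
    (hf_meas.mono fun i hi => hi.inf hf₀_int.1) (hf.mono fun i hi => ?_) hf₀_int.abs ?_
  · filter_upwards [hi] with x hx
    rw [Real.norm_eq_abs, abs_le]
    exact ⟨le_min ((neg_nonpos.2 (abs_nonneg _)).trans hx) (neg_abs_le _),
      (min_le_right _ _).trans (le_abs_self _)⟩
  · filter_upwards [hf_lim] with x hx
    simpa using hx.min (tendsto_const_nhds (x := f₀ x))

-- Pratt's form of dominated convergence: the dominating functions may vary, provided that their
-- integrals converge.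
lemma tendsto_integral_of_nonneg_of_le_of_tendsto {e : ι → α → ℝ} {e₀ : α → ℝ}
    (hf_meas : ∀ᶠ i in l, AEStronglyMeasurable (f i) μ)
    (he_int : ∀ᶠ i in l, Integrable (e i) μ) (hf₀_int : Integrable f₀ μ)
    (he₀_int : Integrable e₀ μ) (hf : ∀ᶠ i in l, 0 ≤ᵐ[μ] f i) (hfe : ∀ᶠ i in l, f i ≤ᵐ[μ] e i)
    (hf_lim : ∀ᵐ x ∂μ, Tendsto (f · x) l (nhds (f₀ x)))
    (he_lim : ∀ᵐ x ∂μ, Tendsto (e · x) l (nhds (e₀ x)))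
    (he_integral : Tendsto (fun i => ∫ x, e i x ∂μ) l (nhds (∫ x, e₀ x ∂μ))) :
    Tendsto (fun i => ∫ x, f i x ∂μ) l (nhds (∫ x, f₀ x ∂μ)) := by
  have hf_int : ∀ᶠ i in l, Integrable (f i) μ := by
    filter_upwards [hf_meas, he_int, hf, hfe] with i hmeas hint h0 hle
    refine hint.mono' hmeas ?_
    filter_upwards [h0, hle] with x h0 hle
    rwa [Real.norm_of_nonneg h0]
  have lower := tendsto_integral_min_of_nonneg hf_meas hf hf₀_int hf_lim
  have gap := tendsto_integral_min_of_nonneg (f := fun i x => e i x - f i x)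
    (f₀ := fun x => e₀ x - f₀ x) (hf_meas.mp (he_int.mono fun i he hf => he.1.sub hf))
    (hfe.mono fun i hi => hi.mono fun x => sub_nonneg.2) (he₀_int.sub hf₀_int)
    (by filter_upwards [hf_lim, he_lim] with x hf he using he.sub hf)
  have upper := he_integral.sub gap
  rw [integral_sub he₀_int hf₀_int, sub_sub_cancel] at upper
  refine tendsto_of_tendsto_of_tendsto_of_le_of_le' lower upper ?_ ?_
  · filter_upwards [hf_int] with i hi
    exact integral_mono (hi.inf hf₀_int) hi fun x => min_le_left _ _
  · filter_upwards [hf_int, he_int] with i hfi hei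
    have := integral_mono ((hei.sub hfi).inf (he₀_int.sub hf₀_int)) (hei.sub hfi)
      fun x => min_le_left _ _
    rw [integral_sub' hei hfi] at this
    exact le_sub_comm.1 this

end Pratt

section Cutoff

variable (E : Type*) [NormedAddCommGroup E] [NormedSpace ℝ E] [FiniteDimensional ℝ E]

/-- A smooth bump which is `1` on the closed unit ball and vanishes outside the ball of radius `2`;
its dilates are the cutoff functions `cutoff N`. -/
def unitBump : ContDiffBump (0 : E) := ⟨1, 2, one_pos, one_lt_two⟩

variable {E}

/-- The cutoff function at scale `N + 1`: it is `1` for `‖x‖ ≤ N + 1` and vanishes for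
`2 * (N + 1) ≤ ‖x‖`. The sequence exhausts the space and is used to localize integrals. -/
def cutoff (N : ℕ) (x : E) : ℝ := unitBump E (((N : ℝ) + 1)⁻¹ • x)

lemma contDiff_cutoff (N : ℕ) : ContDiff ℝ 1 (cutoff N : E → ℝ) :=
  (unitBump E).contDiff.comp (contDiff_const_smul _)

lemma hasCompactSupport_cutoff (N : ℕ) : HasCompactSupport (cutoff N : E → ℝ) :=
  (unitBump E).hasCompactSupport.comp_smul (by positivity)

lemma cutoff_nonneg (N : ℕ) (x : E) : 0 ≤ cutoff N x := (unitBump E).nonneg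

lemma cutoff_le_one (N : ℕ) (x : E) : cutoff N x ≤ 1 := (unitBump E).le_one

lemma eventually_cutoff_eventuallyEq_one (x : E) :
    ∀ᶠ N in atTop, cutoff N =ᶠ[nhds x] fun _ => 1 := by
  filter_upwards [eventually_gt_atTop ⌈‖x‖⌉₊] with N hN
  have hx : ‖x‖ < (N : ℝ) + 1 := (Nat.lt_of_ceil_lt hN).trans (lt_add_one _)
  have hmem : ((N : ℝ) + 1)⁻¹ • x ∈ Metric.ball (0 : E) (unitBump E).rIn := by
    rw [mem_ball_zero_iff, norm_smul, Real.norm_of_nonneg (by positivity),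
      inv_mul_lt_iff₀ (by positivity)]
    exact hx.trans_eq (mul_one _).symm
  exact (continuous_const_smul _).continuousAt.eventually
    ((unitBump E).eventuallyEq_one_of_mem_ball hmem)

lemma exists_one_add_norm_mul_norm_fderiv_cutoff_le :
    ∃ C, ∀ (N : ℕ) (x : E), (1 + ‖x‖) * ‖fderiv ℝ (cutoff N) x‖ ≤ C := by
  have hbump : ContDiff ℝ 1 (unitBump E) := (unitBump E).contDiff
  have hcont : Continuous fun x => (1 + ‖x‖) * ‖fderiv ℝ (unitBump E) x‖ :=
    (continuous_const.add continuous_norm).mul (hbump.continuous_fderiv one_ne_zero).norm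
  have hsupp : HasCompactSupport fun x => (1 + ‖x‖) * ‖fderiv ℝ (unitBump E) x‖ :=
    ((unitBump E).hasCompactSupport.fderiv ℝ).norm.mul_left
  obtain ⟨C, hC⟩ := hsupp.exists_bound_of_continuous hcont
  refine ⟨C, fun N x => ?_⟩
  have hN : 0 < ((N : ℝ) + 1)⁻¹ := by positivity
  have hN₁ : ((N : ℝ) + 1)⁻¹ ≤ 1 := inv_le_one_of_one_le₀ (by simp)
  have hfderiv : fderiv ℝ (cutoff N) x =
      ((N : ℝ) + 1)⁻¹ • fderiv ℝ (unitBump E) (((N : ℝ) + 1)⁻¹ • x) := fderiv_comp_smul _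
  rw [hfderiv, norm_smul, Real.norm_of_nonneg hN.le, ← mul_assoc]
  refine le_trans ?_ ((Real.le_norm_self _).trans (hC (((N : ℝ) + 1)⁻¹ • x)))
  gcongr
  rw [norm_smul, Real.norm_of_nonneg hN.le]
  linarith

lemma norm_fderiv_cutoff_mul_le {N : ℕ} {x : E} {η : E → ℝ} {w C : ℝ}
    (hC : (1 + ‖x‖) * ‖fderiv ℝ (cutoff N) x‖ ≤ C) (hη : DifferentiableAt ℝ η x)
    (hηw : |η x| ≤ (1 + ‖x‖) * w) (hη'w : ‖fderiv ℝ η x‖ ≤ w) :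
    ‖fderiv ℝ (fun y => cutoff N y * η y) x‖ ≤ (1 + C) * w := by
  have hw : 0 ≤ w := (norm_nonneg _).trans hη'w
  rw [fderiv_fun_mul ((contDiff_cutoff N).differentiable one_ne_zero x) hη]
  calc ‖cutoff N x • fderiv ℝ η x + η x • fderiv ℝ (cutoff N) x‖
      ≤ cutoff N x * ‖fderiv ℝ η x‖ + |η x| * ‖fderiv ℝ (cutoff N) x‖ := by
        refine (norm_add_le _ _).trans_eq ?_
        rw [norm_smul, norm_smul, Real.norm_of_nonneg (cutoff_nonneg N x), Real.norm_eq_abs]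
    _ ≤ 1 * w + (1 + ‖x‖) * w * ‖fderiv ℝ (cutoff N) x‖ := by
        gcongr
        exact cutoff_le_one N x
    _ = (1 + (1 + ‖x‖) * ‖fderiv ℝ (cutoff N) x‖) * w := by ring
    _ ≤ (1 + C) * w := by gcongr

lemma tendsto_integral_cutoff_mul [MeasurableSpace E] [BorelSpace E] {μ : Measure E} {f : E → ℝ}
    (hf : Integrable f μ) :
    Tendsto (fun N => ∫ x, cutoff N x * f x ∂μ) atTop (nhds (∫ x, f x ∂μ)) := by
  refine tendsto_integral_of_dominated_convergence (fun x => |f x|)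
    (fun N => (contDiff_cutoff N).continuous.aestronglyMeasurable.mul hf.1) hf.abs
    (fun N => ae_of_all _ fun x => ?_) (ae_of_all _ fun x => ?_)
  · rw [norm_mul, Real.norm_of_nonneg (cutoff_nonneg N x)]
    exact mul_le_of_le_one_left (norm_nonneg _) (cutoff_le_one N x)
  · exact tendsto_nhds_of_eventually_eq <|
      (eventually_cutoff_eventuallyEq_one x).mono fun N hN => by rw [hN.eq_of_nhds, one_mul]

end Cutoff

section Divergence

variable {ι : Type*} [Fintype ι] [DecidableEq ι] {V W : EuclideanSpace ℝ ι → EuclideanSpace ℝ ι}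
  {f : EuclideanSpace ℝ ι → ℝ} {x : EuclideanSpace ℝ ι}

/-- The divergence `∑ i, ∂ᵢVᵢ` of a vector field on `ℝⁿ`. -/
def divergence (V : EuclideanSpace ℝ ι → EuclideanSpace ℝ ι) (x : EuclideanSpace ℝ ι) : ℝ :=
  ∑ i, fderiv ℝ (fun y => V y i) x (EuclideanSpace.single i 1)

lemma divergence_add (hV : DifferentiableAt ℝ V x) (hW : DifferentiableAt ℝ W x) :
    divergence (fun y => V y + W y) x = divergence V x + divergence W x := by
  rw [differentiableAt_piLp] at hV hW
  simp only [divergence, PiLp.add_apply]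
  rw [← Finset.sum_add_distrib]
  refine Finset.sum_congr rfl fun i _ => ?_
  rw [fderiv_fun_add (hV i) (hW i), add_apply]

lemma sum_apply_mul_map_single (L : EuclideanSpace ℝ ι →L[ℝ] ℝ) (v : EuclideanSpace ℝ ι) :
    ∑ i, v i * L (EuclideanSpace.single i 1) = L v := by
  conv_rhs => rw [← (EuclideanSpace.basisFun ι ℝ).sum_repr v, map_sum]
  simp

lemma divergence_smul (hf : DifferentiableAt ℝ f x) (hV : DifferentiableAt ℝ V x) :
    divergence (fun y => f y • V y) x = f x * divergence V x + fderiv ℝ f x (V x) := by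
  rw [differentiableAt_piLp] at hV
  rw [← sum_apply_mul_map_single (fderiv ℝ f x), divergence, divergence, Finset.mul_sum,
    ← Finset.sum_add_distrib]
  refine Finset.sum_congr rfl fun i _ => ?_
  simp only [PiLp.smul_apply, smul_eq_mul]
  rw [fderiv_fun_mul hf (hV i)]
  simp

lemma divergence_const (v : EuclideanSpace ℝ ι) : divergence (fun _ => v) x = 0 := by
  simp [divergence]

lemma continuous_divergence (hV : ContDiff ℝ 1 V) : Continuous (divergence V) :=
  continuous_finsetSum _ fun _ _ =>
    (((contDiff_piLp_apply (p := 2)).comp hV).continuous_fderiv one_ne_zero).clm_apply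
      continuous_const

lemma integral_divergence_eq_zero_of_hasCompactSupport (hV : ContDiff ℝ 1 V)
    (hV_supp : HasCompactSupport V) : ∫ x, divergence V x = 0 := by
  have hVi (i : ι) : ContDiff ℝ 1 fun y => V y i := by fun_prop
  have hVi_supp (i : ι) : HasCompactSupport fun y => V y i :=
    hV_supp.comp_left (g := fun v : EuclideanSpace ℝ ι => v i) rfl
  have hderiv (i : ι) : Integrable fun x => fderiv ℝ (fun y => V y i) x
      (EuclideanSpace.single i 1) :=
    (((hVi i).continuous_fderiv one_ne_zero).clm_apply
      continuous_const).integrable_of_hasCompactSupport ((hVi_supp i).fderiv_apply ℝ _)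
  simp only [divergence]
  rw [integral_finsetSum _ fun i _ => hderiv i]
  refine Finset.sum_eq_zero fun i _ => ?_
  have := integral_mul_fderiv_eq_neg_fderiv_mul_of_integrable (μ := volume) (f := fun _ => (1 : ℝ))
    (g := fun y => V y i) (v := EuclideanSpace.single i 1) (by simp) (by simpa using hderiv i)
    (by simpa using (hVi i).continuous.integrable_of_hasCompactSupport (hVi_supp i))
    (fun x _ => differentiableAt_const _) (fun x _ => (hVi i).differentiable one_ne_zero x)
  simpa using this

lemma integral_mul_divergence {φ : EuclideanSpace ℝ ι → ℝ} (hφ : ContDiff ℝ 1 φ)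
    (hφ_supp : HasCompactSupport φ) (hV : ContDiff ℝ 1 V) :
    ∫ x, φ x * divergence V x = -∫ x, fderiv ℝ φ x (V x) := by
  have hφ_div : Integrable fun x => φ x * divergence V x :=
    (hφ.continuous.mul (continuous_divergence hV)).integrable_of_hasCompactSupport
      hφ_supp.mul_right
  have hφ_flux : Integrable fun x => fderiv ℝ φ x (V x) :=
    ((hφ.continuous_fderiv one_ne_zero).clm_apply hV.continuous).integrable_of_hasCompactSupport <|
      (hφ_supp.fderiv ℝ).mono fun x hx h => hx (by simp [h])
  rw [eq_neg_iff_add_eq_zero, ← integral_add hφ_div hφ_flux,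
    ← integral_divergence_eq_zero_of_hasCompactSupport (hφ.smul hV) hφ_supp.smul_right]
  exact integral_congr_ae <| ae_of_all _ fun x => (divergence_smul
    (hφ.differentiable one_ne_zero x) (hV.differentiable one_ne_zero x)).symm

lemma integral_divergence_eq_zero (hV : ContDiff ℝ 1 V) (hV_int : Integrable V) :
    ∫ x, divergence V x = 0 := by
  by_cases hdiv : Integrable (divergence V)
  swap
  · exact integral_undef hdiv
  obtain ⟨C, hC⟩ := exists_one_add_norm_mul_norm_fderiv_cutoff_le (E := EuclideanSpace ℝ ι)
  have flux_vanishes : Tendsto (fun N => ∫ x, fderiv ℝ (cutoff N) x (V x)) atTop (nhds 0) := by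
    rw [← integral_zero (EuclideanSpace ℝ ι) ℝ]
    refine tendsto_integral_of_dominated_convergence (fun x => C * ‖V x‖)
      (fun N => (((contDiff_cutoff N).continuous_fderiv one_ne_zero).clm_apply
        hV.continuous).aestronglyMeasurable) (hV_int.norm.const_mul C)
      (fun N => ae_of_all _ fun x => ?_) (ae_of_all _ fun x => ?_)
    · refine (fderiv ℝ (cutoff N) x).le_of_opNorm_le (le_trans ?_ (hC N x)) (V x)
      exact le_mul_of_one_le_left (norm_nonneg _) (by linarith [norm_nonneg x])
    · exact tendsto_nhds_of_eventually_eq <|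
        (eventually_cutoff_eventuallyEq_one x).mono fun N hN => by simp [hN.fderiv_eq]
  refine tendsto_nhds_unique (tendsto_integral_cutoff_mul hdiv) ?_
  simp_rw [integral_mul_divergence (contDiff_cutoff _) (hasCompactSupport_cutoff _) hV]
  simpa using flux_vanishes.neg

end Divergence

section TimeDerivative

variable {E F : Type*} [NormedAddCommGroup E] [NormedSpace ℝ E] [NormedAddCommGroup F]
  [NormedSpace ℝ F] {a b t : ℝ}

lemma contDiff_slice {q : ℝ → E → F}
    (hq : ContDiffOn ℝ 1 (fun p : ℝ × E => q p.1 p.2) (Set.Ioo a b ×ˢ Set.univ))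
    (ht : t ∈ Set.Ioo a b) : ContDiff ℝ 1 (q t) :=
  hq.comp_contDiff (f := fun x => (t, x)) (by fun_prop) fun _ => ⟨ht, trivial⟩

lemma hasDerivAt_slice {q : ℝ → E → F}
    (hq : ContDiffOn ℝ 1 (fun p : ℝ × E => q p.1 p.2) (Set.Ioo a b ×ˢ Set.univ))
    (ht : t ∈ Set.Ioo a b) (x : E) :
    HasDerivAt (fun s => q s x) (fderiv ℝ (fun p : ℝ × E => q p.1 p.2) (t, x) (1, 0)) t :=
  ((hq.contDiffAt ((isOpen_Ioo.prod isOpen_univ).mem_nhds ⟨ht, trivial⟩)).differentiableAt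
    one_ne_zero).hasFDerivAt.comp_hasDerivAt t ((hasDerivAt_id t).prodMk (hasDerivAt_const t x))

variable {q : ℝ → E → ℝ} [MeasurableSpace E] [OpensMeasurableSpace E] {μ : Measure E}
  [IsFiniteMeasureOnCompacts μ]

lemma hasDerivAt_integral_mul_of_hasCompactSupport
    (hq : ContDiffOn ℝ 1 (fun p : ℝ × E => q p.1 p.2) (Set.Ioo a b ×ˢ Set.univ))
    {φ : E → ℝ} (hφ : Continuous φ) (hφ_supp : HasCompactSupport φ) (ht : t ∈ Set.Ioo a b) :
    HasDerivAt (fun s => ∫ x, φ x * q s x ∂μ) (∫ x, φ x * deriv (fun s => q s x) t ∂μ) t := by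
  have hcont : ContinuousOn (fun p : ℝ × E => fderiv ℝ (fun p : ℝ × E => q p.1 p.2) p (1, 0))
      (Set.Ioo a b ×ˢ Set.univ) :=
    (hq.continuousOn_fderiv_of_isOpen (isOpen_Ioo.prod isOpen_univ) le_rfl).clm_apply
      continuousOn_const
  have hcont_slice : Continuous fun x => fderiv ℝ (fun p : ℝ × E => q p.1 p.2) (t, x) (1, 0) :=
    hcont.comp_continuous (f := fun x : E => (t, x)) (by fun_prop) fun x => ⟨ht, trivial⟩
  have integrable_φ_mul {f : E → ℝ} (hf : Continuous f) : Integrable (fun x => φ x * f x) μ :=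
    (hφ.mul hf).integrable_of_hasCompactSupport hφ_supp.mul_right
  obtain ⟨ε, hε, hsub⟩ := Metric.nhds_basis_closedBall.mem_iff.1 (isOpen_Ioo.mem_nhds ht)
  have hball : Metric.closedBall t ε ∈ nhds t := Metric.closedBall_mem_nhds t hε
  obtain ⟨B, hB⟩ := ((isCompact_closedBall t ε).prod
    hφ_supp.isCompact).exists_bound_of_continuousOn
      (hcont.mono (Set.prod_mono hsub (Set.subset_univ _)))
  simp_rw [fun x => (hasDerivAt_slice hq ht x).deriv]
  refine (hasDerivAt_integral_of_dominated_loc_of_deriv_le (bound := fun x => ‖φ x‖ * B) hball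
    ?_ (integrable_φ_mul (contDiff_slice hq ht).continuous)
    (integrable_φ_mul hcont_slice).aestronglyMeasurable (ae_of_all _ fun x s hs => ?_)
    ((hφ.integrable_of_hasCompactSupport hφ_supp).norm.mul_const B)
    (ae_of_all _ fun x s hs => (hasDerivAt_slice hq (hsub hs) x).const_mul (φ x))).2
  · filter_upwards [hball] with s hs
    exact (integrable_φ_mul (contDiff_slice hq (hsub hs)).continuous).aestronglyMeasurable
  · rw [norm_mul]
    by_cases hx : x ∈ tsupport φ
    · exact mul_le_mul_of_nonneg_left (hB (s, x) ⟨hs, hx⟩) (norm_nonneg _)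
    · simp [image_eq_zero_of_notMem_tsupport hx]

end TimeDerivative

section ConservationLaw

variable {ι : Type*} [Fintype ι] [DecidableEq ι] {q : ℝ → EuclideanSpace ℝ ι → ℝ}
  {V : ℝ → EuclideanSpace ℝ ι → EuclideanSpace ℝ ι} {a b t : ℝ}

/-- The scalar conservation law `∂ₜq + div V = 0` on `ℝⁿ × (a, b)`, for a `C¹` density `q` and a
flux `V` which is `C¹` in space. -/
structure IsConservationLaw (q : ℝ → EuclideanSpace ℝ ι → ℝ)
    (V : ℝ → EuclideanSpace ℝ ι → EuclideanSpace ℝ ι) (a b : ℝ) : Prop where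
  contDiffOn : ContDiffOn ℝ 1 (fun p : ℝ × EuclideanSpace ℝ ι => q p.1 p.2)
    (Set.Ioo a b ×ˢ Set.univ)
  contDiff_flux : ∀ t ∈ Set.Ioo a b, ContDiff ℝ 1 (V t)
  deriv_add_divergence : ∀ t ∈ Set.Ioo a b, ∀ x, deriv (fun s => q s x) t + divergence (V t) x = 0

namespace IsConservationLaw

lemma integral_deriv_eq_zero (h : IsConservationLaw q V a b) (ht : t ∈ Set.Ioo a b)
    (hV : Integrable (V t)) : ∫ x, deriv (fun s => q s x) t = 0 := by
  simp_rw [fun x => eq_neg_of_add_eq_zero_left (h.deriv_add_divergence t ht x)]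
  rw [integral_neg, integral_divergence_eq_zero (h.contDiff_flux t ht) hV, neg_zero]

lemma hasDerivAt_integral_mul_of_hasCompactSupport (h : IsConservationLaw q V a b)
    {φ : EuclideanSpace ℝ ι → ℝ} (hφ : ContDiff ℝ 1 φ) (hφ_supp : HasCompactSupport φ)
    (ht : t ∈ Set.Ioo a b) :
    HasDerivAt (fun s => ∫ x, φ x * q s x) (∫ x, fderiv ℝ φ x (V t x)) t := by
  have hderiv := _root_.hasDerivAt_integral_mul_of_hasCompactSupport (μ := volume) h.contDiffOn
    hφ.continuous hφ_supp ht
  simp_rw [fun x => eq_neg_of_add_eq_zero_left (h.deriv_add_divergence t ht x), mul_neg] at hderiv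
  rwa [integral_neg, integral_mul_divergence hφ hφ_supp (h.contDiff_flux t ht), neg_neg] at hderiv

-- For a weight that is not compactly supported one truncates: `(1 + ‖x‖) * ‖∇χ_N‖` is bounded
-- uniformly in `N`, so the fluxes through `χ_N * η` are uniformly bounded in time.
lemma hasDerivAt_integral_mul (h : IsConservationLaw q V a b) {η w : EuclideanSpace ℝ ι → ℝ}
    (hη : ContDiff ℝ 1 η) (hηw : ∀ x, |η x| ≤ (1 + ‖x‖) * w x) (hη'w : ∀ x, ‖fderiv ℝ η x‖ ≤ w x)
    (hq_int : ∀ s ∈ Set.Ioo a b, Integrable fun x => η x * q s x)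
    (hV_int : ∀ s ∈ Set.Ioo a b, Integrable fun x => w x * ‖V s x‖) {B : ℝ}
    (hB : ∀ s ∈ Set.Ioo a b, ∫ x, w x * ‖V s x‖ ≤ B)
    (hcont : ContinuousOn (fun s => ∫ x, fderiv ℝ η x (V s x)) (Set.Ioo a b))
    (ht : t ∈ Set.Ioo a b) :
    HasDerivAt (fun s => ∫ x, η x * q s x) (∫ x, fderiv ℝ η x (V t x)) t := by
  obtain ⟨C, hC⟩ := exists_one_add_norm_mul_norm_fderiv_cutoff_le (E := EuclideanSpace ℝ ι)
  have hC₀ : 0 ≤ C := le_trans (by positivity) (hC 0 0)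
  have truncated (N : ℕ) : ContDiff ℝ 1 fun x => cutoff N x * η x := (contDiff_cutoff N).mul hη
  have flux_le (N : ℕ) (s : ℝ) (x) :
      ‖fderiv ℝ (fun y => cutoff N y * η y) x (V s x)‖ ≤ (1 + C) * (w x * ‖V s x‖) := by
    rw [← mul_assoc]
    exact ContinuousLinearMap.le_of_opNorm_le _ (norm_fderiv_cutoff_mul_le (hC N x)
      (hη.differentiable one_ne_zero x) (hηw x) (hη'w x)) _
  refine hasDerivAt_of_tendsto_of_norm_le (a := a) (b := b) (C := (1 + C) * B)
    (f := fun N s => ∫ x, cutoff N x * η x * q s x)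
    (f' := fun N s => ∫ x, fderiv ℝ (fun y => cutoff N y * η y) x (V s x))
    (fun N s hs => h.hasDerivAt_integral_mul_of_hasCompactSupport (truncated N)
      (hasCompactSupport_cutoff N).mul_right hs)
    (fun N s hs => ?_) (fun s hs => ?_) (fun s hs => ?_) hcont ht
  · refine (norm_integral_le_of_norm_le ((hV_int s hs).const_mul _)
      (ae_of_all _ (flux_le N s))).trans ?_
    rw [integral_const_mul]
    gcongr
    exact hB s hs
  · simp_rw [mul_assoc]
    exact tendsto_integral_cutoff_mul (hq_int s hs)
  · refine tendsto_integral_of_dominated_convergence (fun x => (1 + C) * (w x * ‖V s x‖))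
      (fun N => (((truncated N).continuous_fderiv one_ne_zero).clm_apply
        (h.contDiff_flux s hs).continuous).aestronglyMeasurable) ((hV_int s hs).const_mul _)
      (fun N => ae_of_all _ (flux_le N s)) (ae_of_all _ fun x => ?_)
    refine tendsto_nhds_of_eventually_eq <|
      (eventually_cutoff_eventuallyEq_one x).mono fun N hN => ?_
    have : (fun y => cutoff N y * η y) =ᶠ[nhds x] η := hN.mono fun y hy => by simp [hy]
    rw [this.fderiv_eq]

end IsConservationLaw

end ConservationLaw

section Monotone

variable {f f' : ℝ → ℝ} {a b x : ℝ}

lemma le_left_of_hasDerivAt_nonpos (hf : ContinuousOn f (Set.Icc a b))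
    (hf' : ∀ y ∈ Set.Ioo a b, HasDerivAt f (f' y) y) (hf'_nonpos : ∀ y ∈ Set.Ioo a b, f' y ≤ 0)
    (hx : x ∈ Set.Icc a b) : f x ≤ f a := by
  rw [← interior_Icc] at hf' hf'_nonpos
  exact antitoneOn_of_hasDerivWithinAt_nonpos (convex_Icc a b) hf
    (fun y hy => (hf' y hy).hasDerivWithinAt) hf'_nonpos (Set.left_mem_Icc.2 (hx.1.trans hx.2)) hx
    hx.1

lemma eq_left_of_hasDerivAt_zero (hf : ContinuousOn f (Set.Icc a b))
    (hf' : ∀ y ∈ Set.Ioo a b, HasDerivAt f 0 y) (hx : x ∈ Set.Icc a b) : f x = f a := by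
  have hneg (y) (hy : y ∈ Set.Ioo a b) : HasDerivAt (fun z => -f z) 0 y := by
    simpa using (hf' y hy).fun_neg
  exact le_antisymm (le_left_of_hasDerivAt_nonpos hf hf' (fun _ _ => le_rfl) hx)
    (neg_le_neg_iff.1 (le_left_of_hasDerivAt_nonpos (f := fun z => -f z) (f' := fun _ => 0)
      hf.fun_neg hneg (fun _ _ => le_rfl) hx))

end Monotone

namespace IsentropicEulerSolution

variable {n : ℕ} {γ T : ℝ} (S : IsentropicEulerSolution n γ T) {t : ℝ}

/-- The pressure `ρ^γ`. -/
def pressure (t : ℝ) (x : EuclideanSpace ℝ (Fin n)) : ℝ := S.ρ t x ^ γ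

/-- The energy density `ρ|u|²/2 + ρ^γ/(γ - 1)`, whose integral is `IE`. -/
def energyDensity (t : ℝ) (x : EuclideanSpace ℝ (Fin n)) : ℝ :=
  (1 / 2 : ℝ) * S.ρ t x * ‖S.u t x‖ ^ 2 + S.ρ t x ^ γ / (γ - 1)

/-- The flux `ρuᵢu + ρ^γ eᵢ` of the `i`-th component of the momentum. -/
def momentumFlux (i : Fin n) (t : ℝ) (x : EuclideanSpace ℝ (Fin n)) : EuclideanSpace ℝ (Fin n) :=
  (S.ρ t x * S.u t x i) • S.u t x + S.pressure t x • EuclideanSpace.single i 1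

section LocalLaws

lemma contDiffOn_ρ : ContDiffOn ℝ 1 (fun p : ℝ × EuclideanSpace ℝ (Fin n) => S.ρ p.1 p.2)
    (Set.Ioo 0 T ×ˢ Set.univ) :=
  S.smooth_ρ.mono (Set.prod_mono Set.Ioo_subset_Icc_self subset_rfl)

lemma contDiffOn_u : ContDiffOn ℝ 1 (fun p : ℝ × EuclideanSpace ℝ (Fin n) => S.u p.1 p.2)
    (Set.Ioo 0 T ×ˢ Set.univ) :=
  S.smooth_u.mono (Set.prod_mono Set.Ioo_subset_Icc_self subset_rfl)

lemma contDiffOn_pressure (hγ : 1 < γ) :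
    ContDiffOn ℝ 1 (fun p : ℝ × EuclideanSpace ℝ (Fin n) => S.pressure p.1 p.2)
      (Set.Ioo 0 T ×ˢ Set.univ) := by
  simpa [pressure] using S.contDiffOn_ρ.rpow_const_of_le (m := 1) (p := γ) (by simpa using hγ.le)

lemma contDiffOn_energyDensity (hγ : 1 < γ) :
    ContDiffOn ℝ 1 (fun p : ℝ × EuclideanSpace ℝ (Fin n) => S.energyDensity p.1 p.2)
      (Set.Ioo 0 T ×ˢ Set.univ) :=
  ((contDiffOn_const.mul S.contDiffOn_ρ).mul (S.contDiffOn_u.norm_sq ℝ)).add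
    ((S.contDiffOn_pressure hγ).div_const _)

lemma contDiff_ρ (ht : t ∈ Set.Ioo 0 T) : ContDiff ℝ 1 (S.ρ t) := contDiff_slice S.contDiffOn_ρ ht

lemma contDiff_u (ht : t ∈ Set.Ioo 0 T) : ContDiff ℝ 1 (S.u t) := contDiff_slice S.contDiffOn_u ht

lemma contDiff_pressure (hγ : 1 < γ) (ht : t ∈ Set.Ioo 0 T) : ContDiff ℝ 1 (S.pressure t) :=
  contDiff_slice (S.contDiffOn_pressure hγ) ht

lemma contDiff_energyDensity (hγ : 1 < γ) (ht : t ∈ Set.Ioo 0 T) :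
    ContDiff ℝ 1 (S.energyDensity t) :=
  contDiff_slice (S.contDiffOn_energyDensity hγ) ht

lemma isConservationLaw_mass :
    IsConservationLaw S.ρ (fun t x => S.ρ t x • S.u t x) 0 T where
  contDiffOn := S.contDiffOn_ρ
  contDiff_flux _ ht := (S.contDiff_ρ ht).smul (S.contDiff_u ht)
  deriv_add_divergence t ht x := S.mass_eq t (Set.Ioo_subset_Icc_self ht) x

lemma divergence_pressure_smul_single (hγ : 1 < γ) (ht : t ∈ Set.Ioo 0 T)
    (x : EuclideanSpace ℝ (Fin n)) (i : Fin n) :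
    divergence (fun y => S.pressure t y • EuclideanSpace.single i 1) x
      = fderiv ℝ (S.pressure t) x (EuclideanSpace.single i 1) := by
  rw [divergence_smul ((S.contDiff_pressure hγ ht).differentiable one_ne_zero x)
    (differentiableAt_const _), divergence_const, mul_zero, zero_add]

lemma isConservationLaw_momentum (hγ : 1 < γ) (i : Fin n) :
    IsConservationLaw (fun t x => S.ρ t x * S.u t x i) (S.momentumFlux i) 0 T where
  contDiffOn := S.contDiffOn_ρ.mul
    ((EuclideanSpace.proj (𝕜 := ℝ) i).contDiff.comp_contDiffOn S.contDiffOn_u)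
  contDiff_flux t ht := by
    have := S.contDiff_ρ ht
    have := S.contDiff_u ht
    have := S.contDiff_pressure hγ ht
    unfold momentumFlux
    fun_prop
  deriv_add_divergence t ht x := by
    have hρ := (S.contDiff_ρ ht).differentiable one_ne_zero x
    have hu := (S.contDiff_u ht).differentiable one_ne_zero x
    have hp := (S.contDiff_pressure hγ ht).differentiable one_ne_zero x
    unfold momentumFlux
    rw [divergence_add (by fun_prop) (by fun_prop), S.divergence_pressure_smul_single hγ ht,
      ← add_assoc]
    exact S.momentum_eq t (Set.Ioo_subset_Icc_self ht) x i

lemma deriv_pressure_add (hγ : 1 < γ) (ht : t ∈ Set.Ioo 0 T) (x : EuclideanSpace ℝ (Fin n)) :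
    deriv (fun s => S.pressure s x) t + fderiv ℝ (S.pressure t) x (S.u t x)
      = -(γ * S.pressure t x * divergence (S.u t) x) := by
  have hρ := (S.contDiff_ρ ht).differentiable one_ne_zero x
  have hu := (S.contDiff_u ht).differentiable one_ne_zero x
  have hmass := S.isConservationLaw_mass.deriv_add_divergence t ht x
  rw [divergence_smul hρ hu] at hmass
  have hpressure : S.ρ t x ^ γ = S.ρ t x ^ (γ - 1) * S.ρ t x := by
    rw [← Real.rpow_add_one' (S.ρ_nonneg t (Set.Ioo_subset_Icc_self ht) x) (by linarith),
      sub_add_cancel]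
  have hderiv := ((hasDerivAt_slice S.contDiffOn_ρ ht x).differentiableAt.hasDerivAt.rpow_const
    (p := γ) (Or.inr hγ.le)).deriv
  have hfderiv := (hρ.hasFDerivAt.rpow_const (p := γ) (Or.inr hγ.le)).fderiv
  unfold pressure
  rw [hderiv, hfderiv, hpressure, smul_apply, smul_eq_mul]
  linear_combination (γ * S.ρ t x ^ (γ - 1)) * hmass

lemma ρ_mul_acceleration_apply_add_fderiv_pressure (hγ : 1 < γ) (ht : t ∈ Set.Ioo 0 T)
    (x : EuclideanSpace ℝ (Fin n)) (i : Fin n) :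
    S.ρ t x * (deriv (fun s => S.u s x) t + fderiv ℝ (S.u t) x (S.u t x)) i
      + fderiv ℝ (S.pressure t) x (EuclideanSpace.single i 1) = 0 := by
  have hρ := (S.contDiff_ρ ht).differentiable one_ne_zero x
  have hu := (S.contDiff_u ht).differentiable one_ne_zero x
  have hp := (S.contDiff_pressure hγ ht).differentiable one_ne_zero x
  have hmass := S.isConservationLaw_mass.deriv_add_divergence t ht x
  have hmomentum := (S.isConservationLaw_momentum hγ i).deriv_add_divergence t ht x
  have hflux : S.momentumFlux i t = fun y =>
      S.u t y i • S.ρ t y • S.u t y + S.pressure t y • EuclideanSpace.single i 1 := by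
    funext y
    rw [momentumFlux, smul_smul, mul_comm]
  have hderiv_ui : HasDerivAt (fun s => S.u s x i) (deriv (fun s => S.u s x) t i) t :=
    (EuclideanSpace.proj (𝕜 := ℝ) i).hasFDerivAt.comp_hasDerivAt t
      (hasDerivAt_slice S.contDiffOn_u ht x).differentiableAt.hasDerivAt
  have hfderiv_ui : fderiv ℝ (fun y => S.u t y i) x (S.ρ t x • S.u t x)
      = S.ρ t x * fderiv ℝ (S.u t) x (S.u t x) i := by
    have : HasFDerivAt (fun y => S.u t y i) (EuclideanSpace.proj i ∘L fderiv ℝ (S.u t) x) x :=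
      (EuclideanSpace.proj (𝕜 := ℝ) i).hasFDerivAt.comp x hu.hasFDerivAt
    rw [map_smul, this.fderiv]
    rfl
  rw [hflux, divergence_add (by fun_prop) (by fun_prop),
    divergence_smul (by fun_prop) (by fun_prop),
    S.divergence_pressure_smul_single hγ ht, hfderiv_ui,
    ((hasDerivAt_slice S.contDiffOn_ρ ht x).differentiableAt.hasDerivAt.fun_mul hderiv_ui).deriv]
    at hmomentum
  rw [PiLp.add_apply]
  linear_combination hmomentum - S.u t x i * hmass

lemma ρ_mul_inner_acceleration_add_fderiv_pressure (hγ : 1 < γ) (ht : t ∈ Set.Ioo 0 T)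
    (x : EuclideanSpace ℝ (Fin n)) :
    S.ρ t x * ⟪S.u t x, deriv (fun s => S.u s x) t + fderiv ℝ (S.u t) x (S.u t x)⟫_ℝ
      + fderiv ℝ (S.pressure t) x (S.u t x) = 0 := by
  rw [← sum_apply_mul_map_single (fderiv ℝ (S.pressure t) x), PiLp.inner_apply, Finset.mul_sum,
    ← Finset.sum_add_distrib]
  refine Finset.sum_eq_zero fun i _ => ?_
  have := S.ρ_mul_acceleration_apply_add_fderiv_pressure hγ ht x i
  rw [RCLike.inner_apply, conj_trivial]
  linear_combination S.u t x i * this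

lemma deriv_energyDensity (hγ : 1 < γ) (ht : t ∈ Set.Ioo 0 T) (x : EuclideanSpace ℝ (Fin n)) :
    deriv (fun s => S.energyDensity s x) t
      = (1 / 2 : ℝ) * ‖S.u t x‖ ^ 2 * deriv (fun s => S.ρ s x) t
        + S.ρ t x * ⟪S.u t x, deriv (fun s => S.u s x) t⟫_ℝ
        + deriv (fun s => S.pressure s x) t / (γ - 1) := by
  have hρ := (hasDerivAt_slice S.contDiffOn_ρ ht x).differentiableAt.hasDerivAt
  have hu := (hasDerivAt_slice S.contDiffOn_u ht x).differentiableAt.hasDerivAt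
  have hp := (hasDerivAt_slice (S.contDiffOn_pressure hγ) ht x).differentiableAt.hasDerivAt
  refine (((hρ.const_mul (1 / 2 : ℝ)).mul hu.norm_sq).add (hp.div_const (γ - 1))).deriv.trans ?_
  ring

lemma divergence_energyFlux (hγ : 1 < γ) (ht : t ∈ Set.Ioo 0 T) (x : EuclideanSpace ℝ (Fin n)) :
    divergence (fun y => (S.energyDensity t y + S.pressure t y) • S.u t y) x
      = (1 / 2 : ℝ) * ‖S.u t x‖ ^ 2 * divergence (fun y => S.ρ t y • S.u t y) x
        + S.ρ t x * ⟪S.u t x, fderiv ℝ (S.u t) x (S.u t x)⟫_ℝ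
        + γ / (γ - 1) * (S.pressure t x * divergence (S.u t) x
          + fderiv ℝ (S.pressure t) x (S.u t x)) := by
  have hρ := (S.contDiff_ρ ht).differentiable one_ne_zero x
  have hu := (S.contDiff_u ht).differentiable one_ne_zero x
  have hp := (S.contDiff_pressure hγ ht).differentiable one_ne_zero x
  have hflux : (fun y => (S.energyDensity t y + S.pressure t y) • S.u t y) = fun y =>
      ((1 / 2 : ℝ) * ‖S.u t y‖ ^ 2) • S.ρ t y • S.u t y
        + (γ / (γ - 1) * S.pressure t y) • S.u t y := by
    have : γ - 1 ≠ 0 := by linarith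
    funext y
    rw [smul_smul, ← add_smul, energyDensity, pressure]
    congr 1
    field_simp
    ring
  have hnorm_sq := (hu.hasFDerivAt.norm_sq.const_mul (1 / 2 : ℝ)).fderiv
  rw [hflux, divergence_add (((hu.norm_sq ℝ).const_mul _).fun_smul (hρ.fun_smul hu))
      ((hp.const_mul _).fun_smul hu), divergence_smul ((hu.norm_sq ℝ).const_mul _) (hρ.fun_smul hu),
    divergence_smul (hp.const_mul _) hu, hnorm_sq, fderiv_const_mul hp]
  simp only [map_smul, smul_apply, ContinuousLinearMap.comp_apply, coe_innerSL_apply, nsmul_eq_mul,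
    Nat.cast_ofNat, smul_eq_mul]
  ring

lemma isConservationLaw_energy (hγ : 1 < γ) :
    IsConservationLaw S.energyDensity (fun t x => (S.energyDensity t x + S.pressure t x) • S.u t x)
      0 T where
  contDiffOn := S.contDiffOn_energyDensity hγ
  contDiff_flux _ ht :=
    ((S.contDiff_energyDensity hγ ht).add (S.contDiff_pressure hγ ht)).smul (S.contDiff_u ht)
  deriv_add_divergence t ht x := by
    have hmass := S.isConservationLaw_mass.deriv_add_divergence t ht x
    have hmomentum := S.ρ_mul_inner_acceleration_add_fderiv_pressure hγ ht x
    have hpressure := S.deriv_pressure_add hγ ht x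
    have hγ' : γ / (γ - 1) = 1 + 1 / (γ - 1) := by
      field_simp [show γ - 1 ≠ 0 by linarith]
      ring
    rw [inner_add_right] at hmomentum
    rw [S.deriv_energyDensity hγ ht, S.divergence_energyFlux hγ ht]
    linear_combination (1 / 2 : ℝ) * ‖S.u t x‖ ^ 2 * hmass + hmomentum
      + hpressure / (γ - 1) + fderiv ℝ (S.pressure t) x (S.u t x) * hγ'

end LocalLaws

section Functionals

lemma continuous_ρ (ht : t ∈ Set.Icc 0 T) : Continuous (S.ρ t) :=
  S.smooth_ρ.continuousOn.comp_continuous (f := fun x => (t, x)) (by fun_prop)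
    fun _ => ⟨ht, trivial⟩

lemma continuous_u (ht : t ∈ Set.Icc 0 T) : Continuous (S.u t) :=
  S.smooth_u.continuousOn.comp_continuous (f := fun x => (t, x)) (by fun_prop)
    fun _ => ⟨ht, trivial⟩

lemma I_nonneg (hγ : 1 < γ) (ht : t ∈ Set.Icc 0 T) : 0 ≤ S.I t :=
  mul_nonneg (one_div_nonneg.2 (sub_nonneg.2 hγ.le))
    (integral_nonneg fun x => Real.rpow_nonneg (S.ρ_nonneg t ht x) γ)

lemma integral_pressure (hγ : 1 < γ) (t : ℝ) : ∫ x, S.pressure t x = (γ - 1) * S.I t := by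
  rw [I, ← mul_assoc, mul_one_div_cancel (by linarith), one_mul]
  rfl

lemma integrable_energyDensity (ht : t ∈ Set.Icc 0 T) : Integrable (S.energyDensity t) := by
  unfold energyDensity
  simp_rw [mul_assoc]
  exact ((S.int_ρu2 t ht).const_mul _).add ((S.int_ργ t ht).div_const _)

lemma integral_energyDensity (ht : t ∈ Set.Icc 0 T) : ∫ x, S.energyDensity t x = S.IE t := by
  simp_rw [energyDensity, mul_assoc]
  rw [integral_add ((S.int_ρu2 t ht).const_mul _) ((S.int_ργ t ht).div_const _),
    integral_const_mul, integral_div, IE, Ek, I, one_div_mul_eq_div (γ - 1)]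

lemma integral_ρ_mul_norm_mul_norm_le (ht : t ∈ Set.Icc 0 T) :
    ∫ x, S.ρ t x * ‖S.u t x‖ * ‖x‖ ≤ S.Ek t + S.G t := by
  have hu := (S.int_ρu2 t ht).const_mul (1 / 2)
  have hx := (S.int_ρx2 t ht).const_mul (1 / 2)
  rw [Ek, G, ← integral_const_mul, ← integral_const_mul, ← integral_add hu hx]
  refine integral_mono (S.int_ρux t ht) (hu.add hx) fun x => ?_
  linarith [mul_nonneg (S.ρ_nonneg t ht x) (sq_nonneg (‖S.u t x‖ - ‖x‖))]

lemma integrable_ρ_mul_inner (ht : t ∈ Set.Icc 0 T) :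
    Integrable fun x => S.ρ t x * ⟪S.u t x, x⟫_ℝ := by
  refine (S.int_ρux t ht).mono' ((S.continuous_ρ ht).mul
    ((S.continuous_u ht).inner continuous_id)).aestronglyMeasurable (ae_of_all _ fun x => ?_)
  rw [norm_mul, Real.norm_of_nonneg (S.ρ_nonneg t ht x), mul_assoc]
  exact mul_le_mul_of_nonneg_left (norm_inner_le_norm _ _) (S.ρ_nonneg t ht x)

-- Expand `0 ≤ ∫ ρ * ‖x - s • u‖ ^ 2 / 2`.
lemma sq_mul_I_le (ht : t ∈ Set.Icc 0 T) (s : ℝ) :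
    s ^ 2 * S.I t ≤ S.G t - s * S.F t + s ^ 2 * S.IE t := by
  have hx := (S.int_ρx2 t ht).const_mul (1 / 2)
  have hu := (S.int_ρu2 t ht).const_mul (s ^ 2 * (1 / 2))
  have hux := (S.integrable_ρ_mul_inner ht).const_mul s
  have hsub : Integrable fun x =>
      (1 / 2) * (S.ρ t x * ‖x‖ ^ 2) - s * (S.ρ t x * ⟪S.u t x, x⟫_ℝ) := hx.sub hux
  have hexpand (x) : (1 / 2) * S.ρ t x * ‖x - s • S.u t x‖ ^ 2
      = (1 / 2) * (S.ρ t x * ‖x‖ ^ 2) - s * (S.ρ t x * ⟪S.u t x, x⟫_ℝ)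
        + s ^ 2 * (1 / 2) * (S.ρ t x * ‖S.u t x‖ ^ 2) := by
    rw [norm_sub_sq_real, real_inner_smul_right, norm_smul, mul_pow, Real.norm_eq_abs, sq_abs,
      real_inner_comm]
    ring
  have hnonneg : 0 ≤ ∫ x, (1 / 2) * S.ρ t x * ‖x - s • S.u t x‖ ^ 2 :=
    integral_nonneg fun x => by have := S.ρ_nonneg t ht x; positivity
  simp_rw [hexpand] at hnonneg
  rw [integral_add hsub hu, integral_sub hx hux, integral_const_mul, integral_const_mul,
    integral_const_mul] at hnonneg
  simp only [IE, G, Ek, F]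
  linarith

end Functionals

section Conservation

lemma exists_norm_u_le (ht : t ∈ Set.Icc 0 T) : ∃ c, ∀ x, ‖S.u t x‖ ≤ c := by
  have hfar : ∀ᶠ x in Bornology.cobounded _, ‖S.u t x‖ ≤ 1 :=
    (S.decay_u t ht).eventually_le_const one_pos
  rw [Metric.cobounded_eq_cocompact] at hfar
  obtain ⟨K, hK, hKc⟩ := mem_cocompact.1 hfar
  obtain ⟨c, hc⟩ := hK.exists_bound_of_continuousOn (S.continuous_u ht).continuousOn
  refine ⟨max c 1, fun x => ?_⟩
  by_cases hx : x ∈ K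
  · exact (hc x hx).trans (le_max_left _ _)
  · exact (hKc hx).trans (le_max_right _ _)

lemma M_eq (ht : t ∈ Set.Icc 0 T) : S.M t = S.M 0 := by
  refine eq_left_of_hasDerivAt_zero
    (fun s hs => (S.hM s hs).continuousAt.continuousWithinAt) (fun s hs => ?_) ht
  have hs' := Set.Ioo_subset_Icc_self hs
  have hflux : Integrable fun x => S.ρ s x • S.u s x := by
    refine (S.int_ρu s hs').mono' ((S.continuous_ρ hs').smul
      (S.continuous_u hs')).aestronglyMeasurable (ae_of_all _ fun x => ?_)
    rw [norm_smul, Real.norm_of_nonneg (S.ρ_nonneg s hs' x)]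
  exact S.isConservationLaw_mass.integral_deriv_eq_zero hs hflux ▸ S.hM s hs'

lemma IE_eq (hγ : 1 < γ) (ht : t ∈ Set.Icc 0 T) : S.IE t = S.IE 0 := by
  rw [← S.integral_energyDensity ht, ← S.integral_energyDensity ⟨le_rfl, ht.1.trans ht.2⟩]
  refine eq_left_of_hasDerivAt_zero (f := fun s => ∫ x, S.energyDensity s x)
    (fun s hs => (S.hIE s hs).continuousAt.continuousWithinAt) (fun s hs => ?_) ht
  have hs' := Set.Ioo_subset_Icc_self hs
  obtain ⟨c, hc⟩ := S.exists_norm_u_le hs'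
  have hflux : Integrable fun x => (S.energyDensity s x + S.pressure s x) • S.u s x :=
    ((S.integrable_energyDensity hs').add (S.int_ργ s hs')).smul_bdd c
      (S.continuous_u hs').aestronglyMeasurable (ae_of_all _ hc)
  exact (S.isConservationLaw_energy hγ).integral_deriv_eq_zero hs hflux ▸ S.hIE s hs'

end Conservation

section Virial

lemma continuousOn_G : ContinuousOn S.G (Set.Icc 0 T) := fun t ht =>
  (S.hG t ht).continuousAt.continuousWithinAt

lemma continuousOn_F : ContinuousOn S.F (Set.Icc 0 T) := fun t ht =>
  (S.hF t ht).continuousAt.continuousWithinAt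

lemma exists_integral_ρ_mul_norm_mul_norm_le (hγ : 1 < γ) :
    ∃ B, ∀ t ∈ Set.Icc 0 T, ∫ x, S.ρ t x * ‖S.u t x‖ * ‖x‖ ≤ B := by
  obtain ⟨g, hg⟩ := isCompact_Icc.exists_bound_of_continuousOn
    S.continuousOn_G
  refine ⟨S.IE 0 + g, fun t ht => (S.integral_ρ_mul_norm_mul_norm_le ht).trans ?_⟩
  have hEk : S.Ek t ≤ S.IE t := le_add_of_nonneg_right (S.I_nonneg hγ ht)
  exact add_le_add (hEk.trans_eq (S.IE_eq hγ ht)) ((le_abs_self _).trans (hg t ht))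

lemma hasDerivAt_G (hγ : 1 < γ) (ht : t ∈ Set.Ioo 0 T) : HasDerivAt S.G (S.F t) t := by
  have hsub : Set.Ioo 0 T ⊆ Set.Icc 0 T := Set.Ioo_subset_Icc_self
  obtain ⟨B, hB⟩ := S.exists_integral_ρ_mul_norm_mul_norm_le hγ
  have hfderiv (x : EuclideanSpace ℝ (Fin n)) :
      fderiv ℝ (fun y : EuclideanSpace ℝ (Fin n) => (1 / 2 : ℝ) * ‖y‖ ^ 2) x = innerSL ℝ x := by
    rw [((hasStrictFDerivAt_norm_sq x).hasFDerivAt.const_mul (1 / 2 : ℝ)).fderiv]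
    ext v
    simp
  have hflux_norm (s) (hs : s ∈ Set.Ioo 0 T) (x) :
      ‖x‖ * ‖S.ρ s x • S.u s x‖ = S.ρ s x * ‖S.u s x‖ * ‖x‖ := by
    rw [norm_smul, Real.norm_of_nonneg (S.ρ_nonneg s (hsub hs) x), mul_comm]
  have hflux (s : ℝ) : ∫ x, innerSL ℝ x (S.ρ s x • S.u s x) = S.F s := by
    simp only [map_smul, innerSL_apply_apply, smul_eq_mul, real_inner_comm, F]
  have hweight (s x) : (1 / 2 : ℝ) * ‖x‖ ^ 2 * S.ρ s x = (1 / 2) * (S.ρ s x * ‖x‖ ^ 2) := by ring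
  have hG : (fun s => ∫ x, (1 / 2 : ℝ) * ‖x‖ ^ 2 * S.ρ s x) = S.G := by
    funext s
    simp_rw [hweight, integral_const_mul, G]
  have hderiv := S.isConservationLaw_mass.hasDerivAt_integral_mul
    (η := fun x => (1 / 2 : ℝ) * ‖x‖ ^ 2) (w := fun x => ‖x‖) (B := B)
    (contDiff_const.mul (contDiff_norm_sq ℝ))
    (fun x => by rw [abs_of_nonneg (by positivity)]; nlinarith [norm_nonneg x])
    (fun x => by rw [hfderiv, innerSL_apply_norm]) (fun s hs => ?_) (fun s hs => ?_)
    (fun s hs => ?_) ?_ ht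
  · simpa only [hfderiv, hflux, hG] using hderiv
  · simpa only [hweight] using (S.int_ρx2 s (hsub hs)).const_mul (1 / 2)
  · simpa only [hflux_norm s hs] using S.int_ρux s (hsub hs)
  · simpa only [hflux_norm s hs] using hB s (hsub hs)
  · simp_rw [hfderiv, hflux]
    exact S.continuousOn_F.mono hsub

lemma norm_momentumFlux_le (hγ : 1 < γ) (ht : t ∈ Set.Icc 0 T) (i : Fin n)
    (x : EuclideanSpace ℝ (Fin n)) :
    ‖S.momentumFlux i t x‖ ≤ (γ + 1) * S.energyDensity t x := by
  have hρ := S.ρ_nonneg t ht x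
  have hp : 0 ≤ S.pressure t x := Real.rpow_nonneg hρ γ
  have hγ' : 0 < γ - 1 := by linarith
  have hui : |S.u t x i| ≤ ‖S.u t x‖ := PiLp.norm_apply_le (S.u t x) i
  calc ‖S.momentumFlux i t x‖
      ≤ S.ρ t x * |S.u t x i| * ‖S.u t x‖ + S.pressure t x := by
        refine (norm_add_le _ _).trans_eq ?_
        simp [norm_smul, abs_of_nonneg hρ, abs_of_nonneg hp]
    _ ≤ S.ρ t x * ‖S.u t x‖ * ‖S.u t x‖ + S.pressure t x := by gcongr
    _ = 2 * ((1 / 2 : ℝ) * S.ρ t x * ‖S.u t x‖ ^ 2)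
          + (γ - 1) * (S.pressure t x / (γ - 1)) := by
        field_simp
    _ ≤ (γ + 1) * ((1 / 2 : ℝ) * S.ρ t x * ‖S.u t x‖ ^ 2)
          + (γ + 1) * (S.pressure t x / (γ - 1)) := by
        gcongr <;> linarith
    _ = (γ + 1) * S.energyDensity t x := by rw [← mul_add]; rfl

lemma continuous_momentumFlux (hγ : 1 < γ) (ht : t ∈ Set.Ioo 0 T) (i : Fin n) :
    Continuous (S.momentumFlux i t) :=
  ((S.isConservationLaw_momentum hγ i).contDiff_flux t ht).continuous

lemma integrable_momentumFlux (hγ : 1 < γ) (ht : t ∈ Set.Ioo 0 T) (i : Fin n) :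
    Integrable (S.momentumFlux i t) :=
  ((S.integrable_energyDensity (Set.Ioo_subset_Icc_self ht)).const_mul (γ + 1)).mono'
    (S.continuous_momentumFlux hγ ht i).aestronglyMeasurable
    (ae_of_all _ (S.norm_momentumFlux_le hγ (Set.Ioo_subset_Icc_self ht) i))

lemma momentumFlux_apply_self (i : Fin n) (t : ℝ) (x : EuclideanSpace ℝ (Fin n)) :
    S.momentumFlux i t x i = S.ρ t x * S.u t x i ^ 2 + S.pressure t x := by
  simp [momentumFlux, sq, mul_assoc]

lemma momentumFlux_apply_self_nonneg (ht : t ∈ Set.Icc 0 T) (i : Fin n)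
    (x : EuclideanSpace ℝ (Fin n)) : 0 ≤ S.momentumFlux i t x i := by
  rw [S.momentumFlux_apply_self]
  exact add_nonneg (mul_nonneg (S.ρ_nonneg t ht x) (sq_nonneg _))
    (Real.rpow_nonneg (S.ρ_nonneg t ht x) γ)

lemma continuousAt_momentumFlux_apply_self (hγ : 1 < γ) (ht : t ∈ Set.Ioo 0 T) (i : Fin n)
    (x : EuclideanSpace ℝ (Fin n)) : ContinuousAt (fun s => S.momentumFlux i s x i) t := by
  have hρ := (hasDerivAt_slice S.contDiffOn_ρ ht x).continuousAt
  have hu := (hasDerivAt_slice S.contDiffOn_u ht x).continuousAt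
  have hp := (hasDerivAt_slice (S.contDiffOn_pressure hγ) ht x).continuousAt
  simp_rw [S.momentumFlux_apply_self]
  fun_prop

-- The dominating energy density depends on time, but its integral does not.
lemma continuousOn_integral_momentumFlux_apply (hγ : 1 < γ) (i : Fin n) :
    ContinuousOn (fun t => ∫ x, S.momentumFlux i t x i) (Set.Ioo 0 T) := by
  intro t ht
  have hsub : Set.Ioo 0 T ⊆ Set.Icc 0 T := Set.Ioo_subset_Icc_self
  have hmem : ∀ᶠ s in nhds t, s ∈ Set.Ioo 0 T := isOpen_Ioo.mem_nhds ht
  refine ContinuousAt.continuousWithinAt (tendsto_integral_of_nonneg_of_le_of_tendsto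
    (e := fun s x => (γ + 1) * S.energyDensity s x) (e₀ := fun x => (γ + 1) * S.energyDensity t x)
    (hmem.mono fun s hs => ?_) (hmem.mono fun s hs => ?_) ?_ ?_ (hmem.mono fun s hs => ?_)
    (hmem.mono fun s hs => ?_) ?_ ?_ ?_)
  · exact ((EuclideanSpace.proj (𝕜 := ℝ) i).continuous.comp
      (S.continuous_momentumFlux hγ hs i)).aestronglyMeasurable
  · exact (S.integrable_energyDensity (hsub hs)).const_mul _
  · exact (EuclideanSpace.proj (𝕜 := ℝ) i).integrable_comp (S.integrable_momentumFlux hγ ht i)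
  · exact (S.integrable_energyDensity (hsub ht)).const_mul _
  · exact ae_of_all _ (S.momentumFlux_apply_self_nonneg (hsub hs) i)
  · exact ae_of_all _ fun x => (le_abs_self _).trans
      ((PiLp.norm_apply_le _ i).trans (S.norm_momentumFlux_le hγ (hsub hs) i x))
  · exact ae_of_all _ (S.continuousAt_momentumFlux_apply_self hγ ht i)
  · exact ae_of_all _ fun x =>
      (hasDerivAt_slice (S.contDiffOn_energyDensity hγ) ht x).continuousAt.const_mul (γ + 1)
  · refine tendsto_const_nhds.congr' (hmem.mono fun s hs => ?_)
    simp_rw [integral_const_mul, S.integral_energyDensity (hsub hs),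
      S.integral_energyDensity (hsub ht), S.IE_eq hγ (hsub hs), S.IE_eq hγ (hsub ht)]

lemma integrable_apply_mul_momentum (ht : t ∈ Set.Icc 0 T) (i : Fin n) :
    Integrable fun x : EuclideanSpace ℝ (Fin n) => x i * (S.ρ t x * S.u t x i) := by
  have hu := S.continuous_u ht
  have hρ := S.continuous_ρ ht
  refine (S.int_ρux t ht).mono' (by fun_prop) (ae_of_all _ fun x => ?_)
  rw [norm_mul, norm_mul, Real.norm_of_nonneg (S.ρ_nonneg t ht x), mul_comm]
  exact mul_le_mul (mul_le_mul_of_nonneg_left (PiLp.norm_apply_le _ i) (S.ρ_nonneg t ht x))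
    (PiLp.norm_apply_le x i) (norm_nonneg _)
    (mul_nonneg (S.ρ_nonneg t ht x) (norm_nonneg _))

lemma F_eq_sum (ht : t ∈ Set.Icc 0 T) :
    S.F t = ∑ i, ∫ x : EuclideanSpace ℝ (Fin n), x i * (S.ρ t x * S.u t x i) := by
  rw [F, ← integral_finsetSum _ fun i _ => S.integrable_apply_mul_momentum ht i]
  congr 1 with x
  rw [PiLp.inner_apply, Finset.mul_sum]
  refine Finset.sum_congr rfl fun i _ => ?_
  rw [RCLike.inner_apply, conj_trivial]
  ring

lemma sum_integral_momentumFlux_apply (hγ : 1 < γ) (ht : t ∈ Set.Ioo 0 T) :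
    ∑ i, ∫ x, S.momentumFlux i t x i = 2 * S.Ek t + n * (γ - 1) * S.I t := by
  have ht' := Set.Ioo_subset_Icc_self ht
  have htrace (x) : ∑ i, S.momentumFlux i t x i
      = S.ρ t x * ‖S.u t x‖ ^ 2 + n * S.pressure t x := by
    simp_rw [S.momentumFlux_apply_self, Finset.sum_add_distrib, ← Finset.mul_sum,
      EuclideanSpace.real_norm_sq_eq]
    simp
  have hint (i : Fin n) : Integrable fun x => S.momentumFlux i t x i :=
    (EuclideanSpace.proj (𝕜 := ℝ) i).integrable_comp (S.integrable_momentumFlux hγ ht i)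
  rw [← integral_finsetSum _ fun i _ => hint i]
  simp_rw [htrace]
  have hp : Integrable (S.pressure t) := S.int_ργ t ht'
  rw [integral_add (S.int_ρu2 t ht') (hp.const_mul _), integral_const_mul,
    S.integral_pressure hγ, Ek]
  ring

lemma hasDerivAt_integral_apply_mul_momentum (hγ : 1 < γ) (i : Fin n) (ht : t ∈ Set.Ioo 0 T) :
    HasDerivAt (fun s => ∫ x : EuclideanSpace ℝ (Fin n), x i * (S.ρ s x * S.u s x i))
      (∫ x, S.momentumFlux i t x i) t := by
  have hsub : Set.Ioo 0 T ⊆ Set.Icc 0 T := Set.Ioo_subset_Icc_self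
  let coord : EuclideanSpace ℝ (Fin n) →L[ℝ] ℝ := EuclideanSpace.proj i
  have hcoord : ‖coord‖ ≤ 1 :=
    coord.opNorm_le_bound zero_le_one fun x => (PiLp.norm_apply_le x i).trans_eq (one_mul _).symm
  have hderiv := (S.isConservationLaw_momentum hγ i).hasDerivAt_integral_mul
    (η := coord) (w := fun _ => 1) (B := (γ + 1) * S.IE 0) coord.contDiff
    (fun x => ?_) (fun x => by rwa [coord.fderiv]) (fun s hs => ?_) (fun s hs => ?_)
    (fun s hs => ?_) ?_ ht
  · simp_rw [coord.fderiv] at hderiv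
    exact hderiv
  · exact (PiLp.norm_apply_le x i).trans (by linarith)
  · exact S.integrable_apply_mul_momentum (hsub hs) i
  · simpa only [one_mul] using (S.integrable_momentumFlux hγ hs i).norm
  · simp_rw [one_mul, ← S.IE_eq hγ (hsub hs), ← S.integral_energyDensity (hsub hs),
      ← integral_const_mul]
    exact integral_mono (S.integrable_momentumFlux hγ hs i).norm
      ((S.integrable_energyDensity (hsub hs)).const_mul _)
      (S.norm_momentumFlux_le hγ (hsub hs) i)
  · simp_rw [coord.fderiv]
    exact S.continuousOn_integral_momentumFlux_apply hγ i

lemma hasDerivAt_F (hγ : 1 < γ) (ht : t ∈ Set.Ioo 0 T) :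
    HasDerivAt S.F (2 * S.Ek t + n * (γ - 1) * S.I t) t := by
  rw [← S.sum_integral_momentumFlux_apply hγ ht]
  refine (HasDerivAt.fun_sum fun i _ =>
    S.hasDerivAt_integral_apply_mul_momentum hγ i ht).congr_of_eventuallyEq ?_
  filter_upwards [isOpen_Ioo.mem_nhds ht] with s hs
  exact S.F_eq_sum (Set.Ioo_subset_Icc_self hs)

lemma hasDerivAt_IE (hγ : 1 < γ) (ht : t ∈ Set.Ioo 0 T) : HasDerivAt S.IE 0 t := by
  refine (hasDerivAt_const t (S.IE 0)).congr_of_eventuallyEq ?_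
  filter_upwards [isOpen_Ioo.mem_nhds ht] with s hs
  exact S.IE_eq hγ (Set.Ioo_subset_Icc_self hs)

lemma hasDerivAt_IJ (hγ : 1 < γ) (ht : t ∈ Set.Ioo 0 T) :
    HasDerivAt S.IJ ((2 - n * (γ - 1)) * ((t + 1) * S.I t)) t := by
  have hadd : HasDerivAt (fun s : ℝ => s + 1) 1 t := (hasDerivAt_id t).add_const 1
  refine (((S.hasDerivAt_G hγ ht).sub (hadd.mul (S.hasDerivAt_F hγ ht))).add
    ((hadd.pow 2).mul (S.hasDerivAt_IE hγ ht))).congr_deriv ?_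
  simp only [IE, Pi.pow_apply]
  ring

lemma continuousOn_IJ (hγ : 1 < γ) : ContinuousOn S.IJ (Set.Icc 0 T) := by
  have hIE : ContinuousOn S.IE (Set.Icc 0 T) := continuousOn_const.congr fun _ => S.IE_eq hγ
  exact (S.continuousOn_G.sub (by have := S.continuousOn_F; fun_prop)).add (by fun_prop)

end Virial

section Growth

variable (hγ : 1 < γ) (hγn : n * (γ - 1) ≤ 2) (ht : t ∈ Set.Icc 0 T)
include hγ hγn ht

lemma F_le : S.F t ≤ S.F 0 + 2 * S.IE 0 * t := by
  have h := le_left_of_hasDerivAt_nonpos (f := fun s => S.F s - 2 * S.IE 0 * s)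
    (S.continuousOn_F.sub (by fun_prop))
    (fun s hs => (S.hasDerivAt_F hγ hs).sub ((hasDerivAt_id s).const_mul (2 * S.IE 0)))
    (fun s hs => ?_) ht
  · linarith
  · have hs' := Set.Ioo_subset_Icc_self hs
    rw [← S.IE_eq hγ hs', IE]
    linarith [mul_nonneg (sub_nonneg.2 hγn) (S.I_nonneg hγ hs')]

lemma G_le : S.G t ≤ S.G 0 + S.F 0 * t + S.IE 0 * t ^ 2 := by
  have h := le_left_of_hasDerivAt_nonpos (f := fun s => S.G s - (S.F 0 * s + S.IE 0 * s ^ 2))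
    (S.continuousOn_G.sub (by fun_prop))
    (fun s hs => (S.hasDerivAt_G hγ hs).sub (((hasDerivAt_id s).const_mul (S.F 0)).add
      ((hasDerivAt_pow 2 s).const_mul (S.IE 0)))) (fun s hs => ?_) ht
  · linarith
  · have := S.F_le hγ hγn (Set.Ioo_subset_Icc_self hs)
    simp only [Nat.cast_ofNat, Nat.add_one_sub_one, pow_one, mul_one]
    linarith

lemma I_mul_rpow_le : S.I t * (t + 1) ^ (n * (γ - 1)) ≤ S.IJ 0 := by
  set m := n * (γ - 1)
  have hpos {s : ℝ} (hs : s ∈ Set.Icc 0 T) : 0 < s + 1 := by linarith [hs.1]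
  have hI {s : ℝ} (hs : s ∈ Set.Icc 0 T) : (s + 1) ^ 2 * S.I s ≤ S.IJ s := S.sq_mul_I_le hs (s + 1)
  have hIJ_le := le_left_of_hasDerivAt_nonpos (f := fun s => (s + 1) ^ (m - 2) * S.IJ s)
    (ContinuousOn.mul (ContinuousOn.rpow_const (by fun_prop) fun s hs => Or.inl (hpos hs).ne')
      (S.continuousOn_IJ hγ))
    (fun s hs => (((hasDerivAt_id s).add_const 1).rpow_const (p := m - 2)
      (Or.inl (hpos (Set.Ioo_subset_Icc_self hs)).ne')).mul (S.hasDerivAt_IJ hγ hs))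
    (fun s hs => ?_) ht
  · calc S.I t * (t + 1) ^ m = (t + 1) ^ (m - 2) * ((t + 1) ^ 2 * S.I t) := by
          rw [← mul_assoc, ← Real.rpow_two, ← Real.rpow_add (hpos ht), sub_add_cancel, mul_comm]
      _ ≤ (t + 1) ^ (m - 2) * S.IJ t := by
          have := hpos ht
          gcongr
          exact hI ht
      _ ≤ S.IJ 0 := by simpa using hIJ_le
  · have hs' := Set.Ioo_subset_Icc_self hs
    have := hpos hs'
    calc _ = (2 - m) * (s + 1) ^ (m - 2 - 1) * ((s + 1) ^ 2 * S.I s - S.IJ s) := by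
          rw [id, Real.rpow_sub_one (hpos hs').ne' (m - 2)]
          field_simp
          ring
      _ ≤ 0 := mul_nonpos_of_nonneg_of_nonpos
          (mul_nonneg (by linarith) (by positivity)) (sub_nonpos.2 (hI hs'))

lemma Gamma_div_pi_rpow_mul_half_M_rpow_le (hM : 0 < S.M 0)
    (hQ : 0 < S.G 0 + S.F 0 * t + S.IE 0 * t ^ 2) :
    (Real.Gamma ((n : ℝ) / 2 + 1) / Real.pi ^ ((n : ℝ) / 2)) ^ (γ - 1) *
        (S.M 0 / 2) ^ ((((n : ℝ) + 2) * γ - n) / 2)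
      ≤ (γ - 1) * (S.IJ 0 * ((S.G 0 + S.F 0 * t + S.IE 0 * t ^ 2) / (t + 1) ^ 2) ^
          ((n : ℝ) * (γ - 1) / 2)) := by
  set Q := S.G 0 + S.F 0 * t + S.IE 0 * t ^ 2
  have ht₁ : 0 < t + 1 := by linarith [ht.1]
  have hMt : ∫ x, S.ρ t x = S.M 0 := S.M_eq ht
  have hmass := Gamma_div_pi_rpow_mul_half_integral_rpow_le hγ
    (by rwa [finrank_euclideanSpace_fin]) (S.ρ_nonneg t ht) (S.int_ρ t ht) (S.int_ρx2 t ht)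
    (S.int_ργ t ht) (hMt ▸ hM) hQ (S.G_le hγ hγn ht)
  rw [finrank_euclideanSpace_fin, hMt] at hmass
  have hscale : Q ^ ((n : ℝ) * (γ - 1) / 2) =
      (t + 1) ^ ((n : ℝ) * (γ - 1)) * (Q / (t + 1) ^ 2) ^ ((n : ℝ) * (γ - 1) / 2) := by
    rw [Real.div_rpow hQ.le (by positivity), ← Real.rpow_two, ← Real.rpow_mul ht₁.le,
      mul_div_cancel₀ _ two_ne_zero, mul_div_cancel₀ _ (by positivity)]
  calc _ ≤ (∫ x, S.pressure t x) * Q ^ ((n : ℝ) * (γ - 1) / 2) := hmass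
    _ = (γ - 1) * (S.I t * (t + 1) ^ ((n : ℝ) * (γ - 1)) *
          (Q / (t + 1) ^ 2) ^ ((n : ℝ) * (γ - 1) / 2)) := by
      rw [S.integral_pressure hγ, hscale]
      ring
    _ ≤ _ := by
      gcongr
      exact S.I_mul_rpow_le hγ hγn ht

end Growth

end IsentropicEulerSolution

lemma tendsto_quadratic_div_sq (a b c : ℝ) :
    Tendsto (fun t : ℝ => (a + b * t + c * t ^ 2) / (t + 1) ^ 2) atTop (nhds c) := by
  have hinv : Tendsto (fun t : ℝ => (t + 1)⁻¹) atTop (nhds 0) :=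
    tendsto_inv_atTop_zero.comp (tendsto_atTop_add_const_right _ _ tendsto_id)
  have hlim := ((hinv.const_mul (b - 2 * c)).const_add c).add ((hinv.pow 2).const_mul (a - b + c))
  simp only [mul_zero, add_zero, ne_eq, OfNat.ofNat_ne_zero, not_false_eq_true, zero_pow] at hlim
  refine hlim.congr' ?_
  filter_upwards [eventually_gt_atTop 0] with t ht
  field_simp
  ring

theorem isentropic_euler_blowup_general (n : ℕ) (γ : ℝ) (hγ : 1 < γ)
    (hγn : (n : ℝ) * (γ - 1) ≤ 2) (M₀ : ℝ) (hM₀ : 0 < M₀) (F₀ G₀ : ℝ) (IE₀ : ℝ) (hIE₀ : 0 < IE₀)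
    (hcond : IE₀ ^ ((n : ℝ) * (γ - 1) / 2) * (G₀ - F₀ + IE₀)
        / M₀ ^ ((((n : ℝ) + 2) * γ - n) / 2)
      < (Real.Gamma ((n : ℝ) / 2 + 1) / Real.pi ^ ((n : ℝ) / 2)) ^ (γ - 1)
        / ((2 : ℝ) ^ ((((n : ℝ) + 2) * γ - n) / 2) * (γ - 1))) :
    ∃ Tstar : ℝ, 0 < Tstar ∧ ∀ T : ℝ, Tstar ≤ T →
      ¬ ∃ S : IsentropicEulerSolution n γ T,
          S.M 0 = M₀ ∧ S.F 0 = F₀ ∧ S.G 0 = G₀ ∧ S.IE 0 = IE₀ := by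
  have hγ₁ : 0 < γ - 1 := by linarith
  rw [div_lt_div_iff₀ (by positivity) (by positivity)] at hcond
  have hsmall : (γ - 1) * ((G₀ - F₀ + IE₀) * IE₀ ^ ((n : ℝ) * (γ - 1) / 2))
      < (Real.Gamma ((n : ℝ) / 2 + 1) / Real.pi ^ ((n : ℝ) / 2)) ^ (γ - 1) *
        (M₀ / 2) ^ ((((n : ℝ) + 2) * γ - n) / 2) := by
    rw [Real.div_rpow hM₀.le zero_le_two, ← mul_div_assoc, lt_div_iff₀ (by positivity)]
    linarith
  have hQ := tendsto_quadratic_div_sq G₀ F₀ IE₀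
  have hlim := ((hQ.rpow_const (p := (n : ℝ) * (γ - 1) / 2) (Or.inl hIE₀.ne')).const_mul
    (G₀ - F₀ + IE₀)).const_mul (γ - 1)
  obtain ⟨t, ⟨hlt, hQt⟩, ht⟩ := ((hlim.eventually_lt_const hsmall).and
    (hQ.eventually_const_lt hIE₀)).and (eventually_gt_atTop 0) |>.exists
  refine ⟨t, ht, ?_⟩
  rintro T hT ⟨S, rfl, rfl, rfl, rfl⟩
  refine hlt.not_ge ?_
  simpa [IsentropicEulerSolution.IJ] using
    S.Gamma_div_pi_rpow_mul_half_M_rpow_le hγ hγn ⟨ht.le, hT⟩ hM₀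
      ((div_pos_iff_of_pos_right (by positivity)).1 hQt)

/-- **Theorem 2.2 (Euler case): blow-up for the isentropic compressible Euler equations.**
Let `1 < γ ≤ 1 + 2/n`. If the initial physical quantities satisfy `M(0) > 0`,
`ℙ(0) ≠ 0`, `IE(0) > 0` and
`IE(0)^{n(γ−1)/2} IJ(0) / M(0)^{((n+2)γ−n)/2}
  < (Γ(n/2+1)/π^{n/2})^{γ−1} / (2^{((n+2)γ−n)/2}(γ−1))`
with `IJ(0) = G(0) − F(0) + IE(0)`, then there is a finite time `T₂* > 0` such that no
classical solution (in the sense of `IsentropicEulerSolution`, which encodes the decay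
and integrability conditions) with these initial physical quantities exists on
`ℝⁿ × [0,T]` for any `T ≥ T₂*`; in particular there is no global-in-time solution. -/
theorem isentropic_euler_blowup
    (n : ℕ) (hn : 1 ≤ n) (γ : ℝ) (hγ : 1 < γ) (hγn : γ ≤ 1 + 2 / n)
    (M₀ : ℝ) (hM₀ : 0 < M₀)
    (P₀ : EuclideanSpace ℝ (Fin n)) (hP₀ : P₀ ≠ 0)
    (F₀ G₀ : ℝ) (IE₀ : ℝ) (hIE₀ : 0 < IE₀)
    (hcond : IE₀ ^ ((n : ℝ) * (γ - 1) / 2) * (G₀ - F₀ + IE₀)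
        / M₀ ^ ((((n : ℝ) + 2) * γ - n) / 2)
      < (Real.Gamma ((n : ℝ) / 2 + 1) / Real.pi ^ ((n : ℝ) / 2)) ^ (γ - 1)
        / ((2 : ℝ) ^ ((((n : ℝ) + 2) * γ - n) / 2) * (γ - 1))) :
    ∃ Tstar : ℝ, 0 < Tstar ∧ ∀ T : ℝ, Tstar ≤ T →
      ¬ ∃ S : IsentropicEulerSolution n γ T,
          S.M 0 = M₀ ∧ S.P 0 = P₀ ∧ S.F 0 = F₀ ∧ S.G 0 = G₀ ∧ S.IE 0 = IE₀ := by
  have hγn' : (n : ℝ) * (γ - 1) ≤ 2 := (le_div_iff₀' (by positivity)).1 (by linarith)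
  obtain ⟨Tstar, hpos, hno⟩ :=
    isentropic_euler_blowup_general n γ hγ hγn' M₀ hM₀ F₀ G₀ IE₀ hIE₀ hcond
  exact ⟨Tstar, hpos, fun T hT ⟨S, hM, _, hrest⟩ => hno T hT ⟨S, hM, hrest⟩⟩
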